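/- arXiv:1604.08053 — 2 statements merged into one kernel-verified Lean document; each statement's English description precedes it below -/
import Mathlib

section
/- Every flow-admissible signed cubic graph (G, σ) with exactly two negative edges n₁ and n₂ admits a nowhere-zero 7-flow (D, φ) with φ(n₁) = φ(n₂) = 1 and such that all edges with flow value 6 lie on a single path. -/
open Finset SimpleGraph

attribute [local instance] Classical.propDecidable

variable {V : Type}

/-- `σ` is a valid `±1` signature on the edges of `G`. -/
def IsSignature (G : SimpleGraph V) (σ : Sym2 V → ℤ) : Prop :=
  ∀ e ∈ G.edgeSet, σ e = 1 ∨ σ e = -1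

/-- The set of negative edges of the signed graph `(G, σ)`. -/
def NegEdges (G : SimpleGraph V) (σ : Sym2 V → ℤ) : Set (Sym2 V) :=
  {e | e ∈ G.edgeSet ∧ σ e = -1}

/-- A bidirected orientation of the signed graph `(G, σ)`: `τ v e = 1` means that the
half-edge of `e` at `v` points towards `v`, and `τ v e = -1` that it points away from `v`.
On a positive edge the two half-edges are directed consistently, while on a negative edge
both half-edges point outwards (extroverted) or both point inwards (introverted). -/
def IsOrientation (G : SimpleGraph V) (σ : Sym2 V → ℤ) (τ : V → Sym2 V → ℤ) : Prop :=
  (∀ v e, τ v e = 1 ∨ τ v e = -1) ∧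
  ∀ u v, G.Adj u v → τ u s(u, v) * τ v s(u, v) = - σ s(u, v)

/-- `(τ, φ)` is an integer-valued flow on the signed graph `(G, σ)`:
Kirchhoff's law holds at every vertex. -/
def IsFlow [Fintype V] (G : SimpleGraph V) (σ : Sym2 V → ℤ)
    (τ : V → Sym2 V → ℤ) (φ : Sym2 V → ℤ) : Prop :=
  IsOrientation G σ τ ∧
    ∀ v : V, (∑ w : V, if G.Adj v w then τ v s(v, w) * φ s(v, w) else 0) = 0

/-- `(τ, φ)` is a nowhere-zero `k`-flow on `(G, σ)`. -/
def IsNZFlow [Fintype V] (G : SimpleGraph V) (σ : Sym2 V → ℤ) (k : ℤ)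
    (τ : V → Sym2 V → ℤ) (φ : Sym2 V → ℤ) : Prop :=
  IsFlow G σ τ φ ∧ ∀ e ∈ G.edgeSet, 0 < |φ e| ∧ |φ e| < k

/-- A signed graph is flow-admissible if it admits a nowhere-zero `k`-flow for some `k`. -/
def FlowAdmissible [Fintype V] (G : SimpleGraph V) (σ : Sym2 V → ℤ) : Prop :=
  ∃ (k : ℤ) (τ : V → Sym2 V → ℤ) (φ : Sym2 V → ℤ), IsNZFlow G σ k τ φ

/-- The flow number `F(G, σ)`: the least `k` admitting a nowhere-zero `k`-flow. -/
noncomputable def flowNumber [Fintype V] (G : SimpleGraph V) (σ : Sym2 V → ℤ) : ℕ :=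
  sInf {k : ℕ | ∃ τ φ, IsNZFlow G σ (k : ℤ) τ φ}

/-- An edge-cut of `G`: the set of edges crossing a nontrivial vertex partition. -/
def IsEdgeCut (G : SimpleGraph V) (X : Set (Sym2 V)) : Prop :=
  ∃ S : Set V, S.Nonempty ∧ Sᶜ.Nonempty ∧
    X = {e | e ∈ G.edgeSet ∧ ∃ a ∈ S, ∃ b ∈ Sᶜ, e = s(a, b)}

/-- The all-positive signature. -/
def allPos : Sym2 V → ℤ := fun _ => 1

/-- `G` is cubic (3-regular). -/
def CubicGraph (G : SimpleGraph V) : Prop := ∀ v : V, (G.neighborSet v).ncard = 3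

/-- `G` has no bridge. -/
def Bridgeless (G : SimpleGraph V) : Prop := ∀ e ∈ G.edgeSet, ¬ G.IsBridge e

/-- A walk is directed (with respect to the orientation `τ` of `(G, σ)`) if every dart of
the walk traverses a positive edge in the direction of its orientation. -/
def IsDirectedWalk {G : SimpleGraph V} (σ : Sym2 V → ℤ) (τ : V → Sym2 V → ℤ) {u v : V}
    (p : G.Walk u v) : Prop :=
  ∀ d ∈ p.darts, σ s(d.toProd.1, d.toProd.2) = 1 ∧
    τ d.toProd.2 s(d.toProd.1, d.toProd.2) = 1

/-- `M` is a perfect matching (1-factor) of `G`. -/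
def IsPM (G : SimpleGraph V) (M : Set (Sym2 V)) : Prop :=
  M ⊆ G.edgeSet ∧ ∀ v : V, ∃! e, e ∈ M ∧ v ∈ e

/-- `c` is a proper 3-edge-coloring of `G`. -/
def IsProper3EdgeColoring (G : SimpleGraph V) (c : Sym2 V → Fin 3) : Prop :=
  ∀ e₁ ∈ G.edgeSet, ∀ e₂ ∈ G.edgeSet, e₁ ≠ e₂ → (∃ w, w ∈ e₁ ∧ w ∈ e₂) → c e₁ ≠ c e₂

/-!
Delete the negative edges `x₁y₁` and `x₂y₂`. A flow on `(G, σ)` with value `1` on both is then an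
integer valuation of the positive edges in which `x₁`, `y₁` emit one unit each and `x₂`, `y₂` absorb
one unit each. A given nowhere-zero flow yields such a valuation up to a factor `c`, and counting
the demand in a component shows that `x₁` and `x₂` may be assumed connected.

Add an arc from `x₂` to `x₁` and apply Seymour's 6-flow theorem with value `1` on it: this gives a
unit flow `ψ` from `x₁` to `x₂` with `|ψ| ≤ 5` that vanishes only on bridges. By a cut argument `y₂`
can be reached from `y₁` along a path on which one more unit cancels no edge of `ψ` to zero, and
sending that unit produces the value `6` only on the path. On a bridge the demand alone determines
the value of a flow, which is nonzero because it is `1 / c` times the given one.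

Seymour's theorem is proved by contracting an arc of a cut of size at most two and, if there is
none, finding an even subgraph and a `ℤ/3`-flow without a common zero, which lift to `ℤ` by
Hoffman's theorem.
-/

/-- A directed multigraph with vertices `V` and arcs `E`; loops and parallel arcs are allowed. It
carries the flow theory used here: an undirected graph enters through an arbitrary choice of
direction for each edge, a flow against that direction being negative. -/
structure Multidigraph (V E : Type*) where
  src : E → V
  tgt : E → V

namespace Multidigraph

variable {V W E A B : Type*} [AddCommGroup A] [AddCommGroup B]

section Boundary

variable [Fintype E] (D : Multidigraph V E)

/-- The net outflow of an arc valuation at each vertex; circulations are its kernel. -/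
noncomputable def boundary : (E → A) →+ (V → A) where
  toFun f v := ∑ e with D.src e = v, f e - ∑ e with D.tgt e = v, f e
  map_zero' := by ext; simp
  map_add' f g := by
    ext v
    simp only [Pi.add_apply, sum_add_distrib]
    abel

theorem boundary_apply (f : E → A) (v : V) :
    D.boundary f v = ∑ e with D.src e = v, f e - ∑ e with D.tgt e = v, f e :=
  rfl

theorem boundary_single [DecidableEq E] (e : E) (a : A) :
    D.boundary (Pi.single e a) = Pi.single (D.src e) a - Pi.single (D.tgt e) a := by
  ext v
  simp [boundary_apply, Pi.single_apply, eq_comm]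

theorem boundary_comp (φ : A →+ B) (f : E → A) (v : V) :
    D.boundary (φ ∘ f) v = φ (D.boundary f v) := by
  simp [boundary_apply, map_sum]

theorem boundary_congr {f g : E → A} {v : V}
    (h : ∀ e, D.src e ≠ D.tgt e → D.src e = v ∨ D.tgt e = v → f e = g e) :
    D.boundary f v = D.boundary g v := by
  simp only [boundary_apply, sum_filter, ← sum_sub_distrib]
  refine sum_congr rfl fun e _ => ?_
  by_cases hloop : D.src e = D.tgt e
  · simp [hloop]
  · split_ifs with hsrc htgt htgt
    · exact absurd (hsrc.trans htgt.symm) hloop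
    · rw [h e hloop (.inl hsrc)]
    · rw [h e hloop (.inr htgt)]
    · rfl

theorem sum_boundary (f : E → A) (S : Finset V) :
    ∑ v ∈ S, D.boundary f v = ∑ e with D.src e ∈ S, f e - ∑ e with D.tgt e ∈ S, f e := by
  simp only [boundary_apply, sum_sub_distrib, sum_filter]
  rw [sum_comm, sum_comm (s := S)]
  simp

theorem sum_univ_boundary [Fintype V] (f : E → A) : ∑ v, D.boundary f v = 0 := by
  simp [sum_boundary]

/-- The arcs with exactly one end in `S`, irrespective of direction. -/
noncomputable def cut (S : Finset V) : Finset E :=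
  {e | ¬(D.src e ∈ S ↔ D.tgt e ∈ S)}

@[simp]
theorem mem_cut {S : Finset V} {e : E} : e ∈ D.cut S ↔ ¬(D.src e ∈ S ↔ D.tgt e ∈ S) := by
  simp [cut]

theorem src_ne_tgt_of_mem_cut {S : Finset V} {e : E} (he : e ∈ D.cut S) : D.src e ≠ D.tgt e := by
  intro hloop
  simp [hloop] at he

theorem sum_boundary_eq_sum_cut (f : E → A) (S : Finset V) :
    ∑ v ∈ S, D.boundary f v = ∑ e ∈ D.cut S, if D.src e ∈ S then f e else -f e := by
  simp only [sum_boundary, cut, sum_filter, ← sum_sub_distrib]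
  refine sum_congr rfl fun e _ => ?_
  by_cases hsrc : D.src e ∈ S <;> by_cases htgt : D.tgt e ∈ S <;> simp [hsrc, htgt]

theorem boundary_eq_zero_of_cut_eq_empty {U : Finset V} (hU : D.cut U = ∅) {u : V} (hu : u ∈ U)
    {f : E → A} (hf : ∀ v ∈ U, v ≠ u → D.boundary f v = 0) : D.boundary f u = 0 := by
  rw [← sum_eq_single_of_mem u hu hf, sum_boundary_eq_sum_cut, hU, sum_empty]

/-- An arc that is the only one crossing some vertex set. -/
def IsBridge (e : E) : Prop := ∃ S, D.cut S = {e}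

theorem eq_zero_of_cut_eq_singleton {f : E → A} {S : Finset V} {e : E} (hS : D.cut S = {e})
    (hf : ∑ v ∈ S, D.boundary f v = 0) : f e = 0 := by
  rw [sum_boundary_eq_sum_cut, hS, sum_singleton] at hf
  split_ifs at hf
  · exact hf
  · exact neg_eq_zero.mp hf

variable {D} in
theorem IsBridge.eq_zero_of_boundary_eq_zero {e : E} (he : D.IsBridge e) {f : E → A}
    (hf : D.boundary f = 0) : f e = 0 := by
  obtain ⟨S, hS⟩ := he
  exact D.eq_zero_of_cut_eq_singleton hS (by simp [hf])

theorem abs_eq_abs_of_cut_eq_pair [DecidableEq E] {f : E → ℤ} (hf : D.boundary f = 0)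
    {S : Finset V} {a b : E} (hab : a ≠ b) (hS : D.cut S = {a, b}) : |f a| = |f b| := by
  have hsum : (if D.src a ∈ S then f a else -f a) + (if D.src b ∈ S then f b else -f b) = 0 := by
    have hcut := D.sum_boundary_eq_sum_cut f S
    rw [hS, sum_pair hab] at hcut
    simp [← hcut, hf]
  rw [abs_eq_abs]
  split_ifs at hsum <;> omega

end Boundary

section Hoffman

variable [Fintype E] (D : Multidigraph V E)

/-- The largest net outflow from `S` that the lower bounds `l` and upper bounds `u` permit. -/
noncomputable def capacity (l u : E → ℤ) (S : Finset V) : ℤ :=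
  ∑ e ∈ D.cut S, if D.src e ∈ S then u e else -l e

variable {D} {b : V → ℤ} {l u : E → ℤ}

theorem capacity_sub_single (a : E) (S : Finset V) :
    D.capacity l (u - Pi.single a 1) S =
      D.capacity l u S - if D.src a ∈ S ∧ D.tgt a ∉ S then 1 else 0 := by
  rw [← sum_ite_eq_of_mem univ a (fun e => if D.src e ∈ S ∧ D.tgt e ∉ S then (1 : ℤ) else 0)
    (mem_univ a)]
  simp only [capacity, cut, sum_filter, ← sum_sub_distrib, Pi.sub_apply, Pi.single_apply]
  refine sum_congr rfl fun e _ => ?_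
  grind

theorem capacity_add_single (a : E) (S : Finset V) :
    D.capacity (l + Pi.single a 1) u S =
      D.capacity l u S - if D.src a ∉ S ∧ D.tgt a ∈ S then 1 else 0 := by
  rw [← sum_ite_eq_of_mem univ a (fun e => if D.src e ∉ S ∧ D.tgt e ∈ S then (1 : ℤ) else 0)
    (mem_univ a)]
  simp only [capacity, cut, sum_filter, ← sum_sub_distrib, Pi.add_apply, Pi.single_apply]
  refine sum_congr rfl fun e _ => ?_
  grind

theorem capacity_union_add_capacity_inter_lt (hlu : l ≤ u) {a : E} (ha : l a < u a)
    {S T : Finset V} (haS : D.src a ∈ S ∧ D.tgt a ∉ S) (haT : D.src a ∉ T ∧ D.tgt a ∈ T) :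
    D.capacity l u (S ∪ T) + D.capacity l u (S ∩ T) < D.capacity l u S + D.capacity l u T := by
  simp only [capacity, cut, sum_filter, ← sum_add_distrib]
  refine sum_lt_sum (fun e _ => ?_) ⟨a, mem_univ a, ?_⟩
  · have := hlu e
    simp only [mem_union, mem_inter]
    grind
  · simp [haS, haT, ha]

/-- A set `S` blocking the first option and a set `T` blocking the second would be tight and
crossed by `a` in opposite directions, which strict submodularity excludes. -/
theorem le_capacity_sub_single_or_add_single (hlu : l ≤ u) {a : E} (ha : l a < u a)
    (h : ∀ S, ∑ v ∈ S, b v ≤ D.capacity l u S) :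
    (∀ S, ∑ v ∈ S, b v ≤ D.capacity l (u - Pi.single a 1) S) ∨
      ∀ S, ∑ v ∈ S, b v ≤ D.capacity (l + Pi.single a 1) u S := by
  by_contra! hcon
  obtain ⟨⟨S, hS⟩, T, hT⟩ := hcon
  rw [capacity_sub_single] at hS
  rw [capacity_add_single] at hT
  have hS' := h S
  have hT' := h T
  have haS : D.src a ∈ S ∧ D.tgt a ∉ S := by
    by_contra hnot
    simp only [hnot, if_false] at hS
    omega
  have haT : D.src a ∉ T ∧ D.tgt a ∈ T := by
    by_contra hnot
    simp only [hnot, if_false] at hT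
    omega
  rw [if_pos haS] at hS
  rw [if_pos haT] at hT
  have hlt := capacity_union_add_capacity_inter_lt hlu ha haS haT
  have hmod : ∑ v ∈ S ∪ T, b v + ∑ v ∈ S ∩ T, b v = ∑ v ∈ S, b v + ∑ v ∈ T, b v :=
    sum_union_inter
  have := h (S ∪ T)
  have := h (S ∩ T)
  omega

theorem boundary_eq_of_le_capacity_self [Fintype V] (hb : ∑ v, b v = 0)
    (h : ∀ S, ∑ v ∈ S, b v ≤ D.capacity u u S) : D.boundary u = b := by
  have hle : ∀ v ∈ univ, b v ≤ D.boundary u v := fun v _ => by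
    simpa using (h {v}).trans_eq (D.sum_boundary_eq_sum_cut u {v}).symm
  have htotal : ∑ v, b v = ∑ v, D.boundary u v := by rw [hb, sum_univ_boundary]
  ext v
  exact ((sum_eq_sum_iff_of_le hle).mp htotal v (mem_univ v)).symm

/-- Hoffman's circulation theorem. -/
theorem exists_boundary_eq_of_le_capacity [Fintype V] (hlu : l ≤ u) (hb : ∑ v, b v = 0)
    (h : ∀ S, ∑ v ∈ S, b v ≤ D.capacity l u S) :
    ∃ x : E → ℤ, l ≤ x ∧ x ≤ u ∧ D.boundary x = b := by
  obtain ⟨n, hn⟩ : ∃ n : ℕ, ∑ e, (u e - l e) = n :=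
    Int.eq_ofNat_of_zero_le (sum_nonneg fun e _ => sub_nonneg.mpr (hlu e))
  induction n generalizing l u with
  | zero =>
    have hzero := (sum_eq_zero_iff_of_nonneg fun e _ => sub_nonneg.mpr (hlu e)).mp hn
    obtain rfl : u = l := funext fun e => sub_eq_zero.mp (hzero e (mem_univ e))
    exact ⟨u, le_rfl, le_rfl, boundary_eq_of_le_capacity_self hb h⟩
  | succ n ih =>
    obtain ⟨a, -, ha⟩ : ∃ a ∈ univ, 0 < u a - l a := exists_lt_of_sum_lt (by simp [hn])
    have hlu' : l + Pi.single a 1 ≤ u := fun e => by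
      rcases eq_or_ne e a with rfl | hne
      · simpa [Int.add_one_le_iff] using ha
      · simpa [hne] using hlu e
    have hsum : ∑ e, (Pi.single a 1 : E → ℤ) e = 1 := by simp
    have hsingle : (0 : E → ℤ) ≤ Pi.single a 1 := Pi.single_nonneg.mpr zero_le_one
    rcases le_capacity_sub_single_or_add_single hlu (sub_pos.mp ha) h with hu | hl
    · obtain ⟨x, hlx, hxu, hx⟩ := ih (le_sub_iff_add_le.mpr hlu') hu
        (by simp only [Pi.sub_apply, sum_sub_distrib, hsum] at hn ⊢; omega)
      exact ⟨x, hlx, hxu.trans (sub_le_self u hsingle), hx⟩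
    · obtain ⟨x, hlx, hxu, hx⟩ := ih hlu' hl
        (by simp only [Pi.add_apply, sum_sub_distrib, sum_add_distrib, hsum] at hn ⊢; omega)
      exact ⟨x, (le_add_of_nonneg_right hsingle).trans hlx, hxu, hx⟩

end Hoffman

section Lift

variable [Fintype E] {D : Multidigraph V E}

theorem exists_boundary_eq_mul_of_boundary_cast_eq_zero {k : ℕ} {F : E → ℤ}
    (hF : D.boundary (fun e => (F e : ZMod k)) = 0) :
    ∃ b : V → ℤ, ∀ v, D.boundary F v = k * b v := by
  have hdvd : ∀ v, (k : ℤ) ∣ D.boundary F v := fun v => by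
    rw [← ZMod.intCast_zmod_eq_zero_iff_dvd]
    exact (D.boundary_comp (Int.castAddHom (ZMod k)) F v).symm.trans (congrFun hF v)
  exact ⟨fun v => D.boundary F v / k, fun v => (Int.mul_ediv_cancel' (hdvd v)).symm⟩

/-- Keeping `y e₀ = 0` costs less than `k` in each cut, so Hoffman's condition survives by
integrality. -/
theorem exists_boundary_eq_of_boundary_eq_mul [Finite V] {k : ℤ} {F : E → ℤ} {b : V → ℤ}
    (hF_nonneg : ∀ e, 0 ≤ F e) (hF_lt : ∀ e, F e < k) (hb : ∀ v, D.boundary F v = k * b v)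
    (e₀ : E) :
    ∃ y : E → ℤ, D.boundary y = b ∧ y e₀ = 0 ∧ ∀ e, y e = 0 ∨ y e = 1 ∧ F e ≠ 0 := by
  have := Fintype.ofFinite V
  have hk : 0 < k := (hF_nonneg e₀).trans_lt (hF_lt e₀)
  have hsum_b : ∀ S : Finset V, k * ∑ v ∈ S, b v = ∑ v ∈ S, D.boundary F v := fun S => by
    rw [mul_sum, sum_congr rfl fun v _ => hb v]
  let u : E → ℤ := fun e => if F e = 0 ∨ e = e₀ then 0 else 1
  have hterm : ∀ S : Finset V, ∀ e, (if D.src e ∈ S then F e else -F e) ≤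
      k * (if D.src e ∈ S then u e else -0) + if e = e₀ then k - 1 else 0 := fun S e => by
    have := hF_nonneg e
    have := hF_lt e
    simp only [u]
    split_ifs <;> grind
  obtain ⟨y, hy_nonneg, hy_le, hy⟩ := exists_boundary_eq_of_le_capacity (D := D) (b := b) (l := 0)
      (u := u) (fun e => by simp only [u]; split_ifs <;> simp)
      (by simpa [sum_univ_boundary, hk.ne'] using hsum_b univ) fun S => by
    have hle := sum_le_sum fun e (_ : e ∈ D.cut S) => hterm S e
    rw [← sum_boundary_eq_sum_cut, ← hsum_b, sum_add_distrib, ← mul_sum, sum_ite_eq'] at hle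
    refine Int.lt_add_one_iff.mp (lt_of_mul_lt_mul_left (hle.trans_lt ?_) hk.le)
    rw [mul_add, capacity]
    simp only [Pi.zero_apply]
    split_ifs <;> omega
  have hy_cases : ∀ e, y e = 0 ∨ y e = 1 ∧ F e ≠ 0 ∧ e ≠ e₀ := fun e => by
    have := hy_nonneg e
    have := hy_le e
    simp only [u, Pi.zero_apply] at *
    grind
  exact ⟨y, hy, by simpa using hy_cases e₀, fun e => (hy_cases e).imp_right fun h => ⟨h.1, h.2.1⟩⟩

/-- Tutte's passage from modular to integer flows. -/
theorem exists_int_lift [Finite V] {k : ℕ} [NeZero k] {f : E → ZMod k} (hf : D.boundary f = 0)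
    (e₀ : E) :
    ∃ g : E → ℤ, D.boundary g = 0 ∧ (∀ e, (g e : ZMod k) = f e) ∧ (∀ e, |g e| < k) ∧
      g e₀ = (f e₀).val := by
  let F : E → ℤ := fun e => (f e).val
  have hF_nonneg : ∀ e, 0 ≤ F e := fun e => by positivity
  have hF_lt : ∀ e, F e < k := fun e => Int.ofNat_lt.mpr (ZMod.val_lt (f e))
  have hF_cast : ∀ e, (F e : ZMod k) = f e := fun e => by simp [F]
  obtain ⟨b, hb⟩ := exists_boundary_eq_mul_of_boundary_cast_eq_zero
    (D := D) (F := F) ((congrArg D.boundary (funext hF_cast)).trans hf)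
  obtain ⟨y, hy, hy₀, hy_cases⟩ := exists_boundary_eq_of_boundary_eq_mul hF_nonneg hF_lt hb e₀
  refine ⟨F - (k : ℤ) • y, ?_, fun e => ?_, fun e => ?_, ?_⟩
  · ext v
    rw [map_sub, map_zsmul, hy, Pi.sub_apply, hb, Pi.smul_apply, smul_eq_mul, sub_self]
    rfl
  · simp [hF_cast]
  · have := hF_nonneg e
    have := hF_lt e
    rw [abs_lt]
    rcases hy_cases e with h | ⟨h, hne⟩ <;> simp [h] <;> omega
  · simp [hy₀, F]

/-- The combination `3 g₂ + g₃` of lifts of the two components. -/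
theorem exists_int_flow_of_zmod_two_of_zmod_three [Finite V] {h : E → ZMod 2} {f : E → ZMod 3}
    (hh : D.boundary h = 0) (hf : D.boundary f = 0) (hne : ∀ e, h e = 0 → f e ≠ 0) {e₀ : E}
    (he₀ : h e₀ = 0) :
    ∃ ψ : E → ℤ, D.boundary ψ = 0 ∧ ψ e₀ = 1 ∧ ∀ e, |ψ e| ≤ 5 ∧ ψ e ≠ 0 := by
  wlog hfe₀ : f e₀ = 1 generalizing f
  · refine this (f := -f) (by rw [map_neg, hf, neg_zero])
      (fun e he => neg_ne_zero.mpr (hne e he)) ?_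
    have hdichotomy : ∀ x : ZMod 3, x ≠ 0 → x ≠ 1 → -x = 1 := by decide
    exact hdichotomy _ (hne e₀ he₀) hfe₀
  obtain ⟨g₂, hg₂, hg₂_cast, hg₂_lt, hg₂e₀⟩ := exists_int_lift hh e₀
  obtain ⟨g₃, hg₃, hg₃_cast, hg₃_lt, hg₃e₀⟩ := exists_int_lift hf e₀
  have hg₂_zero : ∀ e, g₂ e = 0 ↔ h e = 0 := fun e => by
    rw [← hg₂_cast, ZMod.intCast_zmod_eq_zero_iff_dvd]
    exact ⟨fun h0 => h0 ▸ dvd_zero _, fun hdvd => Int.eq_zero_of_abs_lt_dvd hdvd (hg₂_lt e)⟩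
  have hg₃_ne : ∀ e, f e ≠ 0 → g₃ e ≠ 0 := fun e hfe h0 => hfe (by simp [← hg₃_cast, h0])
  refine ⟨3 • g₂ + g₃, by rw [map_add, map_nsmul, hg₂, hg₃, smul_zero, add_zero], ?_, fun e => ?_⟩
  · simp [hg₂e₀, hg₃e₀, he₀, hfe₀, ZMod.val_one]
  · have h₂ := abs_lt.mp (hg₂_lt e)
    have h₃ := abs_lt.mp (hg₃_lt e)
    have hne' : g₂ e = 0 → g₃ e ≠ 0 := fun h0 => hg₃_ne e (hne e ((hg₂_zero e).mp h0))
    rw [Pi.add_apply, Pi.smul_apply, nsmul_eq_mul, abs_le]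
    omega

end Lift

section Linked

/-- No arc of `F` crosses `S`. -/
def IsClosedUnder (D : Multidigraph V E) (F : Set E) (S : Finset V) : Prop :=
  ∀ e ∈ F, (D.src e ∈ S ↔ D.tgt e ∈ S)

/-- `u` and `v` are in the same connected component of the arcs `F`, phrased through vertex sets
instead of walks. -/
def Linked (D : Multidigraph V E) (F : Set E) (u v : V) : Prop :=
  ∀ S, D.IsClosedUnder F S → (u ∈ S ↔ v ∈ S)

/-- The vertices joined to `r` by arcs of `F`. -/
noncomputable def component [Fintype V] (D : Multidigraph V E) (F : Set E) (r : V) : Finset V :=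
  {v | D.Linked F r v}

variable {D : Multidigraph V E} {F : Set E}

theorem mem_component [Fintype V] {r v : V} : v ∈ D.component F r ↔ D.Linked F r v := by
  simp [component]

theorem self_mem_component [Fintype V] (r : V) : r ∈ D.component F r :=
  mem_component.mpr fun _ _ => Iff.rfl

theorem isClosedUnder_component [Fintype V] (r : V) : D.IsClosedUnder F (D.component F r) := by
  intro e he
  simp only [mem_component, Linked]
  exact forall₂_congr fun S hS => by rw [hS e he]

theorem component_subset [Fintype V] {S : Finset V} (hS : D.IsClosedUnder F S) {r : V}
    (hr : r ∈ S) : D.component F r ⊆ S :=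
  fun _ hv => (mem_component.mp hv S hS).mp hr

theorem component_inter_self [Fintype V] (r : V) :
    D.component (F ∩ {e | D.src e ∈ D.component F r}) r = D.component F r := by
  ext v
  refine ⟨fun hv => ?_, fun hv => mem_component.mpr fun S hS => ?_⟩
  · exact component_subset (fun e he => isClosedUnder_component r e he.1)
      (self_mem_component r) hv
  · have hclosed : D.IsClosedUnder F (S ∩ D.component F r) := fun e he => by
      have hcomp := isClosedUnder_component (D := D) r e he
      have hSe : D.src e ∈ D.component F r → (D.src e ∈ S ↔ D.tgt e ∈ S) :=
        fun hsrc => hS e ⟨he, hsrc⟩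
      simp only [mem_inter]
      tauto
    simpa only [mem_inter, hv, self_mem_component, and_true] using mem_component.mp hv _ hclosed

variable [Fintype E]

theorem isClosedUnder_univ {S : Finset V} : D.IsClosedUnder Set.univ S ↔ D.cut S = ∅ := by
  simp [IsClosedUnder, eq_empty_iff_forall_notMem]

theorem IsClosedUnder.sum_boundary_eq_zero {f : E → A} {S : Finset V}
    (hS : D.IsClosedUnder (Function.support f) S) : ∑ v ∈ S, D.boundary f v = 0 := by
  rw [sum_boundary_eq_sum_cut]
  refine sum_eq_zero fun e he => ?_
  have : f e = 0 := by
    by_contra hne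
    exact (D.mem_cut.mp he) (hS e hne)
  simp [this]

theorem Linked.exists_boundary_eq [Finite V] {u v : V} (h : D.Linked F u v) (a : A) :
    ∃ x : E → A, Function.support x ⊆ F ∧ D.boundary x = Pi.single v a - Pi.single u a := by
  have := Fintype.ofFinite V
  let S : Finset V := {w | ∃ x : E → A, Function.support x ⊆ F ∧
    D.boundary x = Pi.single w a - Pi.single u a}
  suffices hS : D.IsClosedUnder F S by
    have hu : u ∈ S := by simpa [S] using ⟨0, by simp⟩
    simpa [S] using (h S hS).mp hu
  intro e he
  simp only [S, mem_filter_univ]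
  have hsupp : ∀ {x : E → A} (c : A), Function.support x ⊆ F →
      Function.support (x + Pi.single e c) ⊆ F := fun c hx =>
    (Function.support_add _ _).trans (Set.union_subset hx
      (Pi.support_single_subset.trans (Set.singleton_subset_iff.mpr he)))
  constructor
  · rintro ⟨x, hx, hbd⟩
    refine ⟨x + Pi.single e (-a), hsupp _ hx, ?_⟩
    rw [map_add, boundary_single, hbd, Pi.single_neg, Pi.single_neg]
    abel
  · rintro ⟨x, hx, hbd⟩
    refine ⟨x + Pi.single e a, hsupp _ hx, ?_⟩
    rw [map_add, boundary_single, hbd]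
    abel

theorem exists_boundary_eq_of_linked [Finite V] {K : Finset V} {r : V}
    (hK : ∀ v ∈ K, D.Linked F r v) {c : V → A} (hc : ∑ v ∈ K, c v = 0) :
    ∃ x : E → A, Function.support x ⊆ F ∧ ∀ v, D.boundary x v = if v ∈ K then c v else 0 := by
  choose! x hxF hx using fun v hv => (hK v hv).exists_boundary_eq (c v)
  refine ⟨∑ v ∈ K, x v, fun e he => ?_, fun w => ?_⟩
  · rw [Function.mem_support, Finset.sum_apply] at he
    obtain ⟨v, hv, hve⟩ := exists_ne_zero_of_sum_ne_zero he
    exact hxF v hv hve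
  · have hr : ∑ v ∈ K, (Pi.single r (c v) : V → A) w = 0 := by
      simp only [Pi.single_apply]
      split_ifs
      exacts [hc, sum_const_zero]
    rw [map_sum, sum_congr rfl hx, Finset.sum_apply]
    simp only [Pi.sub_apply, sum_sub_distrib, hr, sub_zero]
    simp [Pi.single_apply]

theorem boundary_indicator {f : E → A} {K : Finset V}
    (hK : D.IsClosedUnder (Function.support f) K) (v : V) :
    D.boundary ({e | D.src e ∈ K}.indicator f) v = if v ∈ K then D.boundary f v else 0 := by
  split_ifs with hv
  · refine D.boundary_congr fun e _ hev => ?_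
    by_cases hfe : f e = 0
    · simp [Set.indicator, hfe]
    · have hsrc : D.src e ∈ K := by
        rcases hev with rfl | rfl
        exacts [hv, (hK e hfe).mpr hv]
      exact Set.indicator_of_mem (s := {e | D.src e ∈ K}) hsrc f
  · suffices D.boundary ({e | D.src e ∈ K}.indicator f) v = D.boundary 0 v by simpa using this
    refine D.boundary_congr fun e _ hev => ?_
    by_cases hfe : f e = 0
    · simp [Set.indicator, hfe]
    · have hsrc : D.src e ∉ K := by
        rcases hev with rfl | rfl
        exacts [hv, fun h => hv ((hK e hfe).mp h)]
      exact Set.indicator_of_notMem (s := {e | D.src e ∈ K}) hsrc f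

end Linked

section RelativeFlow

variable [Fintype E]

/-- The arcs of the cut around `S` whose two ends lie in `U`. -/
noncomputable def cutWithin (D : Multidigraph V E) (U S : Finset V) : Finset E :=
  {e ∈ D.cut S | D.src e ∈ U ∧ D.tgt e ∈ U}

variable {D : Multidigraph V E}

theorem mem_cutWithin {U S : Finset V} {e : E} :
    e ∈ D.cutWithin U S ↔ e ∈ D.cut S ∧ D.src e ∈ U ∧ D.tgt e ∈ U :=
  mem_filter

theorem card_cutWithin_inter_add_card_cutWithin_sdiff_le {U Y : Finset V} (hUY : U ⊆ Y)
    (S : Finset V) :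
    #(D.cutWithin Y (U ∩ S)) + #(D.cutWithin Y (U \ S)) ≤
      2 * #(D.cutWithin U S) + #(D.cutWithin Y U) := by
  simp only [cutWithin, cut, filter_filter, card_filter]
  rw [mul_sum, ← sum_add_distrib, ← sum_add_distrib]
  refine sum_le_sum fun e _ => ?_
  have hsrc := @hUY (D.src e)
  have htgt := @hUY (D.tgt e)
  by_cases D.src e ∈ U <;> by_cases D.tgt e ∈ U <;> by_cases D.src e ∈ S <;>
    by_cases D.tgt e ∈ S <;> simp [*]

/-- A minimal `U` with at most one arc to the rest of `Y` is a leaf of the tree of 2-edge-connected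
blocks of the arcs inside `Y`. -/
theorem exists_leaf_block {Y : Finset V} (hY : Y.Nonempty) :
    ∃ U ⊆ Y, U.Nonempty ∧ #(D.cutWithin Y U) ≤ 1 ∧
      ∀ p ∈ U, ∀ q ∈ U, ∀ S, p ∈ S → q ∉ S → 2 ≤ #(D.cutWithin U S) := by
  have hY_self : #(D.cutWithin Y Y) ≤ 1 := by
    suffices D.cutWithin Y Y = ∅ by simp [this]
    refine eq_empty_of_forall_notMem fun e he => ?_
    rw [mem_cutWithin, mem_cut] at he
    tauto
  obtain ⟨U, -, hU⟩ := exists_minimal_le_of_wellFoundedLT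
    (fun U => U ⊆ Y ∧ U.Nonempty ∧ #(D.cutWithin Y U) ≤ 1) Y ⟨subset_rfl, hY, hY_self⟩
  obtain ⟨hUY, hU_ne, hU_card⟩ := hU.prop
  have hproper : ∀ W ⊂ U, W.Nonempty → 2 ≤ #(D.cutWithin Y W) := fun W hWU hW => by
    by_contra! hlt
    exact hU.not_prop_of_lt hWU ⟨hWU.subset.trans hUY, hW, by omega⟩
  refine ⟨U, hUY, hU_ne, hU_card, fun p hp q hq S hpS hqS => ?_⟩
  have hinter := hproper (U ∩ S)
    (inter_subset_left.ssubset_of_mem_notMem hq (by simp [hqS])) ⟨p, by simp [hp, hpS]⟩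
  have hsdiff := hproper (U \ S)
    (sdiff_subset.ssubset_of_mem_notMem hp (by simp [hpS])) ⟨q, by simp [hq, hqS]⟩
  have := card_cutWithin_inter_add_card_cutWithin_sdiff_le (D := D) hUY S
  omega

theorem exists_two_unit_flow [Finite V] {U : Finset V} {p q : V}
    (hcut : ∀ S, p ∈ S → q ∉ S → 2 ≤ #(D.cutWithin U S)) :
    ∃ g : E → ℤ, D.boundary g = Pi.single p 2 - Pi.single q 2 ∧ (∀ e, |g e| ≤ 1) ∧
      ∀ e, g e ≠ 0 → D.src e ∈ U ∧ D.tgt e ∈ U := by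
  have := Fintype.ofFinite V
  let u : E → ℤ := fun e => if D.src e ∈ U ∧ D.tgt e ∈ U then 1 else 0
  have hu : ∀ e, 0 ≤ u e := fun e => by simp only [u]; split_ifs <;> simp
  have hcapacity : ∀ S, D.capacity (-u) u S = #(D.cutWithin U S) := fun S => by
    simp only [capacity, cutWithin, card_filter, Pi.neg_apply, neg_neg, ite_self, u]
    push_cast
    rfl
  obtain ⟨g, hgl, hgu, hg⟩ := exists_boundary_eq_of_le_capacity (D := D)
      (b := Pi.single p 2 - Pi.single q 2) (l := -u) (u := u)
      (fun e => neg_le_self (hu e)) (by simp) fun S => by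
    have := hcut S
    rw [hcapacity]
    simp only [Pi.sub_apply, sum_sub_distrib, sum_pi_single']
    grind
  have habs : ∀ e, |g e| ≤ u e := fun e => abs_le.mpr ⟨hgl e, hgu e⟩
  refine ⟨g, hg, fun e => (habs e).trans ?_, fun e he => ?_⟩
  · simp only [u]
    split_ifs <;> simp
  · by_contra hnot
    exact he (abs_nonpos_iff.mp ((habs e).trans_eq (if_neg hnot)))

/-- The component of `p` in an integer two-unit flow from `p` to `q`, taken modulo two. -/
theorem exists_even_component [Fintype V] {U : Finset V} {p q : V} (hp : p ∈ U)
    (hcut : ∀ S, p ∈ S → q ∉ S → 2 ≤ #(D.cutWithin U S)) :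
    ∃ h : E → ZMod 2, D.boundary h = 0 ∧ D.component h.support p ⊆ U ∧
      q ∈ D.component h.support p ∧ ∀ e, h e ≠ 0 → D.src e ∈ D.component h.support p := by
  obtain ⟨g, hg, hg_le, hgU⟩ := exists_two_unit_flow hcut
  let K := D.component g.support p
  have hKU : K ⊆ U := component_subset (fun e he => by simp [hgU e he]) hp
  have hqK : q ∈ K := by
    by_contra hq
    have hsum := (isClosedUnder_component (D := D) (F := g.support) p).sum_boundary_eq_zero
    simp [hg, sum_sub_distrib, self_mem_component, show q ∉ D.component g.support p from hq] at hsum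
  let f : E → ZMod 2 := Int.castAddHom (ZMod 2) ∘ g
  have hf_support : f.support = g.support := by
    ext e
    refine not_congr ⟨fun he => ?_, fun he => by simp [f, he]⟩
    exact Int.eq_zero_of_abs_lt_dvd ((ZMod.intCast_zmod_eq_zero_iff_dvd (g e) 2).mp he)
      ((hg_le e).trans_lt one_lt_two)
  let h : E → ZMod 2 := {e | D.src e ∈ K}.indicator f
  have hcomponent : D.component h.support p = K := by
    rw [Set.support_indicator, hf_support, Set.inter_comm]
    exact component_inter_self p
  rw [← hcomponent] at hKU hqK
  refine ⟨h, ?_, hKU, hqK, fun e he => ?_⟩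
  · ext v
    have htwo : (2 : ZMod 2) = 0 := rfl
    rw [boundary_indicator (hf_support ▸ isClosedUnder_component p), D.boundary_comp, hg]
    simp only [Pi.sub_apply, Pi.single_apply, Int.coe_castAddHom]
    split_ifs <;> simp [htwo]
  · rw [hcomponent]
    exact Set.mem_of_indicator_ne_zero (s := {e | D.src e ∈ K}) he

/-- Seymour's pair of flows relative to `X`, a vertex set still to be taken apart: an even subgraph
`h` avoiding `X` and a valuation `f` conserved off `X` which together cover the arcs that do not lie
inside `X`. Loops are exempt, their values being free. -/
def HasRelativeFlow (D : Multidigraph V E) (X : Finset V) : Prop :=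
  ∃ (h : E → ZMod 2) (f : E → ZMod 3), D.boundary h = 0 ∧
    (∀ e, D.src e ∈ X ∨ D.tgt e ∈ X → h e = 0) ∧ (∀ v ∉ X, D.boundary f v = 0) ∧
    ∀ e, D.src e ≠ D.tgt e → ¬(D.src e ∈ X ∧ D.tgt e ∈ X) → h e = 0 → f e ≠ 0

theorem sum_boundary_single_of_mem_cut {K : Finset V} {a : E} (ha : a ∈ D.cut K) (c : A) :
    ∑ v ∈ K, D.boundary (Pi.single a c) v = if D.src a ∈ K then c else -c := by
  rw [sum_boundary_eq_sum_cut, sum_eq_single_of_mem a ha fun e _ hne => by simp [hne]]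
  simp

/-- Each of two cut arcs has two nonzero values to choose from, and the resulting sums cover
`ZMod 3`. -/
theorem exists_zmod_three_sum_boundary_eq_zero {K : Finset V} {a b : E} (hab : a ≠ b)
    (ha : a ∈ D.cut K) (hb : b ∈ D.cut K) (f : E → ZMod 3) :
    ∃ f' : E → ZMod 3, (∀ e, e ≠ a → e ≠ b → f' e = f e) ∧ f' a ≠ 0 ∧ f' b ≠ 0 ∧
      ∑ v ∈ K, D.boundary f' v = 0 := by
  have hchoice : ∀ N x y : ZMod 3, ∀ p q : Bool, ∃ c d : ZMod 3, x + c ≠ 0 ∧ y + d ≠ 0 ∧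
      N + (if p then c else -c) + (if q then d else -d) = 0 := by
    decide
  obtain ⟨c, d, hc, hd, hsum⟩ := hchoice (∑ v ∈ K, D.boundary f v) (f a) (f b)
    (decide (D.src a ∈ K)) (decide (D.src b ∈ K))
  refine ⟨f + Pi.single a c + Pi.single b d, fun e hea heb => ?_, ?_, ?_, ?_⟩
  · simp [hea, heb]
  · simpa [hab] using hc
  · simpa [hab.symm] using hd
  · simpa [sum_add_distrib, sum_boundary_single_of_mem_cut, ha, hb] using hsum

theorem exists_zmod_three_extension [Finite V] {X K : Finset V} {F : Set E} {p : V}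
    (hlinked : ∀ v ∈ K, D.Linked F p v) {a b : E} (hab : a ≠ b)
    (ha : a ∈ D.cutWithin (X ∪ K) K) (hb : b ∈ D.cutWithin (X ∪ K) K)
    {f : E → ZMod 3} (hf : ∀ v ∉ X ∪ K, D.boundary f v = 0) :
    ∃ f' : E → ZMod 3, (∀ v ∉ X, D.boundary f' v = 0) ∧
      ∀ e ∉ F, if D.src e ∈ X ∪ K ∧ D.tgt e ∈ X ∪ K then f' e ≠ 0 else f' e = f e := by
  rw [mem_cutWithin] at ha hb
  obtain ⟨f₁, hf₁_eq, hf₁a, hf₁b, hf₁K⟩ := exists_zmod_three_sum_boundary_eq_zero hab ha.1 hb.1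
    fun e => if D.src e ∈ X ∪ K ∧ D.tgt e ∈ X ∪ K then 1 else f e
  have hf₁ : ∀ e, if D.src e ∈ X ∪ K ∧ D.tgt e ∈ X ∪ K then f₁ e ≠ 0 else f₁ e = f e := fun e => by
    split_ifs with hin
    · by_cases hea : e = a
      · exact hea ▸ hf₁a
      by_cases heb : e = b
      · exact heb ▸ hf₁b
      · rw [hf₁_eq e hea heb, if_pos hin]
        exact one_ne_zero
    · have hea : e ≠ a := fun h => hin (h ▸ ha.2)
      have heb : e ≠ b := fun h => hin (h ▸ hb.2)
      rw [hf₁_eq e hea heb, if_neg hin]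
  obtain ⟨x, hx_support, hx⟩ := exists_boundary_eq_of_linked hlinked
    (c := fun v => -D.boundary f₁ v) (by simp [hf₁K])
  refine ⟨f₁ + x, fun v hv => ?_, fun e he => ?_⟩
  · rw [map_add, Pi.add_apply, hx]
    split_ifs with hvK
    · exact add_neg_cancel _
    · have hvXK : v ∉ X ∪ K := by simp [hv, hvK]
      rw [add_zero, ← hf v hvXK]
      refine D.boundary_congr fun e _ hev => ?_
      have hin : ¬(D.src e ∈ X ∪ K ∧ D.tgt e ∈ X ∪ K) := by
        rcases hev with rfl | rfl
        exacts [fun h => hvXK h.1, fun h => hvXK h.2]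
      simpa only [hin, if_false] using hf₁ e
  · have hxe : x e = 0 := Function.notMem_support.mp fun hne => he (hx_support hne)
    simpa only [Pi.add_apply, hxe, add_zero] using hf₁ e

theorem HasRelativeFlow.of_union [Finite V] {X K : Finset V} (hXK : Disjoint X K)
    {h₁ : E → ZMod 2} (hh₁ : D.boundary h₁ = 0)
    (hh₁K : ∀ e, h₁ e ≠ 0 → D.src e ∈ K ∧ D.tgt e ∈ K)
    {p : V} (hlinked : ∀ v ∈ K, D.Linked h₁.support p v) {a b : E} (hab : a ≠ b)
    (ha : a ∈ D.cutWithin (X ∪ K) K) (hb : b ∈ D.cutWithin (X ∪ K) K)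
    (hflow : D.HasRelativeFlow (X ∪ K)) : D.HasRelativeFlow X := by
  obtain ⟨h, f, hh, hhXK, hf, hcover⟩ := hflow
  obtain ⟨f', hf', hf'_eq⟩ := exists_zmod_three_extension hlinked hab ha hb hf
  have hh₁_zero : ∀ e, ¬(D.src e ∈ K ∧ D.tgt e ∈ K) → h₁ e = 0 := fun e => not_imp_comm.mp (hh₁K e)
  refine ⟨h + h₁, f', by simp [hh, hh₁], fun e he => ?_, hf', fun e hloop _ hz => ?_⟩
  · have hnotK : ¬(D.src e ∈ K ∧ D.tgt e ∈ K) := fun hK =>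
      he.elim (disjoint_right.mp hXK hK.1) (disjoint_right.mp hXK hK.2)
    rw [Pi.add_apply, hh₁_zero e hnotK, add_zero]
    exact hhXK e (he.imp (mem_union_left K) (mem_union_left K))
  · rw [Pi.add_apply] at hz
    by_cases hin : D.src e ∈ X ∪ K ∧ D.tgt e ∈ X ∪ K
    · rw [hhXK e (.inl hin.1), zero_add] at hz
      simpa only [hin, and_self, if_true] using hf'_eq e (by simp [hz])
    · have hh₁e := hh₁_zero e fun hK =>
        hin (hK.imp (mem_union_right X) (mem_union_right X))
      have hf'e : f' e = f e := by simpa only [hin, if_false] using hf'_eq e (by simp [hh₁e])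
      rw [hh₁e, add_zero] at hz
      exact hf'e ▸ hcover e hloop hin hz

theorem HasRelativeFlow.of_insert {X U : Finset V} (hXU : Disjoint X U) (hU : D.cut U = ∅) {u : V}
    (hu : u ∈ U) (hflow : D.HasRelativeFlow (insert u X)) : D.HasRelativeFlow X := by
  obtain ⟨h, f, hh, hhX, hf, hcover⟩ := hflow
  refine ⟨h, f, hh, fun e he => hhX e (by grind), fun v hv => ?_, fun e hloop _ hz => ?_⟩
  · rcases eq_or_ne v u with rfl | hvu
    · exact D.boundary_eq_zero_of_cut_eq_empty hU hu fun w hw hwv =>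
        hf w (by simp [hwv, disjoint_right.mp hXU hw])
    · exact hf v (by simp [hv, hvu])
  · have hclosed : D.src e ∈ U ↔ D.tgt e ∈ U := by
      by_contra hnot
      simpa [hU] using D.mem_cut.mpr hnot
    refine hcover e hloop (fun hboth => ?_) hz
    simp only [mem_insert] at hboth
    grind [Finset.disjoint_left]

theorem exists_end_of_mem_cut_of_notMem_cutWithin [Fintype V] {X U : Finset V} (hUX : U ⊆ Xᶜ)
    {a : E} (ha : a ∈ D.cut U) (haX : a ∉ D.cutWithin Xᶜ U) :
    ∃ p ∈ U, ∀ K ⊆ U, p ∈ K → a ∈ D.cutWithin (X ∪ K) K := by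
  rw [mem_cutWithin, and_iff_right ha, mem_compl, mem_compl] at haX
  have hX : ∀ v ∈ U, v ∉ X := fun v hv => mem_compl.mp (hUX hv)
  rw [mem_cut] at ha
  have hsrc := hX (D.src a)
  have htgt := hX (D.tgt a)
  rcases em (D.src a ∈ U) with hU | hU
  · refine ⟨D.src a, hU, fun K hKU hpK => mem_cutWithin.mpr ?_⟩
    have := @hKU (D.tgt a)
    simp only [mem_cut, mem_union]
    tauto
  · refine ⟨D.tgt a, by tauto, fun K hKU hpK => mem_cutWithin.mpr ?_⟩
    have := @hKU (D.src a)
    simp only [mem_cut, mem_union]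
    tauto

theorem hasRelativeFlow [Finite V] (hcut : ∀ S, D.cut S = ∅ ∨ 3 ≤ #(D.cut S)) (X : Finset V) :
    D.HasRelativeFlow X := by
  have := Fintype.ofFinite V
  induction X using WellFoundedGT.induction with | ind X ih =>
  rcases eq_empty_or_nonempty Xᶜ with hX | hX
  · rw [compl_eq_empty_iff] at hX
    subst hX
    exact ⟨0, 0, by simp⟩
  obtain ⟨U, hUX, ⟨u, hu⟩, hU_card, hU_cut⟩ := exists_leaf_block (D := D) hX
  have hXU : Disjoint X U := disjoint_compl_right.mono_right hUX
  rcases hcut U with hempty | hthree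
  · exact .of_insert hXU hempty hu (ih _ (ssubset_insert (disjoint_right.mp hXU hu)))
  · have htwo : 1 < #(D.cut U \ D.cutWithin Xᶜ U) := by
      have := le_card_sdiff (D.cutWithin Xᶜ U) (D.cut U)
      omega
    obtain ⟨a, ha, b, hb, hab⟩ := one_lt_card.mp htwo
    rw [mem_sdiff] at ha hb
    obtain ⟨p, hpU, hp⟩ := exists_end_of_mem_cut_of_notMem_cutWithin hUX ha.1 ha.2
    obtain ⟨q, hqU, hq⟩ := exists_end_of_mem_cut_of_notMem_cutWithin hUX hb.1 hb.2
    obtain ⟨h, hh, hKU, hqK, hhK⟩ := exists_even_component hpU (hU_cut p hpU q hqU)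
    have hXK := hXU.mono_right hKU
    have hpK := self_mem_component (D := D) (F := h.support) p
    refine .of_union hXK hh (fun e he => ⟨hhK e he, ?_⟩) (fun v hv => mem_component.mp hv) hab
      (hp _ hKU hpK) (hq _ hKU hqK) (ih _ ?_)
    · exact (isClosedUnder_component p e he).mp (hhK e he)
    · exact subset_union_left.ssubset_of_mem_notMem (mem_union_right X hpK)
        (disjoint_right.mp hXK hpK)

end RelativeFlow

section Seymour

variable [Fintype E] {D : Multidigraph V E}

theorem exists_flow_of_three_edge_connected [Finite V]
    (hcut : ∀ S, D.cut S = ∅ ∨ 3 ≤ #(D.cut S)) (e₀ : E) :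
    ∃ ψ : E → ℤ, D.boundary ψ = 0 ∧ ψ e₀ = 1 ∧ ∀ e, |ψ e| ≤ 5 ∧ ψ e ≠ 0 := by
  have := Fintype.ofFinite V
  obtain ⟨h, f, hh, hhe₀, hf, hcover⟩ := hasRelativeFlow hcut {D.src e₀}
  have hf_zero : D.boundary f = 0 := by
    ext v
    by_cases hv : v = D.src e₀
    · refine hv ▸ D.boundary_eq_zero_of_cut_eq_empty (U := univ) ?_ (mem_univ _) ?_
      · simp [eq_empty_iff_forall_notMem]
      · exact fun w _ hw => hf w (by simpa using hw)
    · exact hf v (by simpa using hv)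
  refine exists_int_flow_of_zmod_two_of_zmod_three (h := h)
    (f := fun e => if D.src e = D.tgt e then 1 else f e) hh ?_ (fun e he => ?_) (hhe₀ e₀ (by simp))
  · rw [← hf_zero]
    ext v
    exact D.boundary_congr fun e hloop _ => if_neg hloop
  · split_ifs with hloop
    · exact one_ne_zero
    · refine hcover e hloop (fun hends => ?_) he
      simp only [mem_singleton] at hends
      exact hloop (hends.1.trans hends.2.symm)

theorem cut_symmDiff (S T : Finset V) : D.cut (symmDiff S T) = symmDiff (D.cut S) (D.cut T) := by
  ext e
  simp only [mem_cut, mem_symmDiff]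
  tauto

theorem IsBridge.of_cut_eq_pair {a b : E} (hb : D.IsBridge b) (hab : a ≠ b) {S : Finset V}
    (hS : D.cut S = {a, b}) : D.IsBridge a := by
  obtain ⟨T, hT⟩ := hb
  refine ⟨symmDiff S T, ?_⟩
  rw [cut_symmDiff, hS, hT]
  ext e
  simp only [mem_symmDiff, mem_insert, mem_singleton]
  grind

/-- The digraph obtained by renaming, and possibly identifying, vertices along `r`. -/
def map (D : Multidigraph V E) (r : V → W) : Multidigraph W E where
  src := r ∘ D.src
  tgt := r ∘ D.tgt

theorem boundary_map [Fintype V] (r : V → W) (f : E → A) (w : W) :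
    (D.map r).boundary f w = ∑ v with r v = w, D.boundary f v := by
  rw [sum_boundary, boundary_apply]
  congr 1 <;> exact sum_congr (by ext; rw [mem_filter]; simp [map]) fun _ _ => rfl

theorem IsBridge.of_map [Finite V] {r : V → W} {e : E} (he : (D.map r).IsBridge e) :
    D.IsBridge e := by
  have := Fintype.ofFinite V
  obtain ⟨S, hS⟩ := he
  refine ⟨({v | r v ∈ S} : Finset V), hS ▸ ?_⟩
  ext e
  simp [map]

/-- Contraction of the arc `a`, which becomes a loop. -/
noncomputable def contract (D : Multidigraph V E) (a : E) : Multidigraph V E :=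
  D.map (Function.update id (D.tgt a) (D.src a))

theorem card_nonloop_contract_lt {a : E} (ha : D.src a ≠ D.tgt a) :
    #{e | (D.contract a).src e ≠ (D.contract a).tgt e} < #{e | D.src e ≠ D.tgt e} := by
  have hsub : ({e | (D.contract a).src e ≠ (D.contract a).tgt e} : Finset E) ⊆
      ({e | D.src e ≠ D.tgt e} : Finset E) := fun e => by
    simp only [mem_filter, mem_univ, true_and]
    exact mt fun hloop => by simp [contract, map, hloop]
  have hloop : (D.contract a).src a = (D.contract a).tgt a := by simp [contract, map, ha]
  exact card_lt_card (hsub.ssubset_of_mem_notMem (a := a) (by simpa using ha) (by simp [hloop]))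

theorem exists_circulation_of_contract [Finite V] {a : E} (ha : D.src a ≠ D.tgt a) {g : E → A}
    (hg : (D.contract a).boundary g = 0) :
    ∃ ψ : E → A, D.boundary ψ = 0 ∧ ∀ e ≠ a, ψ e = g e := by
  have := Fintype.ofFinite V
  have hfiber : ∀ v ≠ D.tgt a, D.boundary g v + (if v = D.src a then D.boundary g (D.tgt a) else 0)
      = 0 := fun v hv => by
    have hsum := congrFun hg v
    rw [contract, boundary_map, sum_filter,
      ← add_sum_erase _ _ (mem_univ (D.tgt a)), Function.update_self] at hsum
    refine Eq.trans ?_ hsum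
    rw [add_comm, sum_eq_single_of_mem v (by simp [hv])]
    · simp [hv, eq_comm]
    · intro w hw hwv
      simp [(mem_erase.mp hw).1, hwv]
  refine ⟨g + Pi.single a (D.boundary g (D.tgt a)), ?_, fun e he => by simp [he]⟩
  ext v
  rw [map_add, boundary_single]
  by_cases hv : v = D.tgt a
  · simp [hv, ha.symm]
  · simpa [Pi.single_apply, hv] using hfiber v hv

theorem exists_mem_cut_ne {e₀ : E} (he₀ : ¬D.IsBridge e₀) {S : Finset V} (hS : D.cut S ≠ ∅) :
    ∃ a ∈ D.cut S, a ≠ e₀ := by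
  by_contra! hall
  exact he₀ ⟨S, eq_singleton_iff_nonempty_unique_mem.mpr ⟨nonempty_iff_ne_empty.mpr hS, hall⟩⟩

theorem le_five_and_isBridge_of_mem_small_cut {ψ : E → ℤ} (hψ : D.boundary ψ = 0) {S : Finset V}
    (hS : #(D.cut S) < 3) {a : E} (ha : a ∈ D.cut S)
    (hrest : ∀ e ≠ a, |ψ e| ≤ 5 ∧ (ψ e = 0 → D.IsBridge e)) :
    |ψ a| ≤ 5 ∧ (ψ a = 0 → D.IsBridge a) := by
  have hpos : 0 < #(D.cut S) := card_pos.mpr ⟨a, ha⟩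
  obtain hone | htwo : #(D.cut S) = 1 ∨ #(D.cut S) = 2 := by omega
  · have hbridge : D.IsBridge a := by
      obtain ⟨b, hb⟩ := card_eq_one.mp hone
      obtain rfl : a = b := by simpa [hb] using ha
      exact ⟨S, hb⟩
    exact ⟨by simp [hbridge.eq_zero_of_boundary_eq_zero hψ], fun _ => hbridge⟩
  · obtain ⟨b, hab, hcut⟩ : ∃ b, a ≠ b ∧ D.cut S = {a, b} := by
      obtain ⟨x, y, hxy, hcut⟩ := card_eq_two.mp htwo
      rw [hcut, mem_insert, mem_singleton] at ha
      rcases ha with rfl | rfl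
      exacts [⟨y, hxy, hcut⟩, ⟨x, hxy.symm, hcut.trans (pair_comm x a)⟩]
    have habs := D.abs_eq_abs_of_cut_eq_pair hψ hab hcut
    refine ⟨habs ▸ (hrest b hab.symm).1, fun h0 => ?_⟩
    have hb0 : ψ b = 0 := abs_eq_zero.mp (by rw [← habs, h0, abs_zero])
    exact ((hrest b hab.symm).2 hb0).of_cut_eq_pair hab hcut

/-- Seymour's 6-flow theorem, with a prescribed value on one arc. -/
theorem exists_six_flow [Finite V] {e₀ : E} (he₀ : ¬D.IsBridge e₀) :
    ∃ ψ : E → ℤ, D.boundary ψ = 0 ∧ ψ e₀ = 1 ∧ ∀ e, |ψ e| ≤ 5 ∧ (ψ e = 0 → D.IsBridge e) := by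
  induction hn : #{e | D.src e ≠ D.tgt e} using Nat.strong_induction_on generalizing D with
  | _ n ih =>
  by_cases hsmall : ∃ S, D.cut S ≠ ∅ ∧ #(D.cut S) < 3
  · obtain ⟨S, hne, hlt⟩ := hsmall
    obtain ⟨a, ha, hae₀⟩ := exists_mem_cut_ne he₀ hne
    have hloop := D.src_ne_tgt_of_mem_cut ha
    obtain ⟨g, hg, hge₀, hg_le⟩ :=
      ih _ (hn ▸ card_nonloop_contract_lt hloop) (fun h => he₀ h.of_map) rfl
    obtain ⟨ψ, hψ, hψ_eq⟩ := exists_circulation_of_contract hloop hg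
    have hrest : ∀ e ≠ a, |ψ e| ≤ 5 ∧ (ψ e = 0 → D.IsBridge e) := fun e he => by
      rw [hψ_eq e he]
      exact (hg_le e).imp_right fun h h0 => (h h0).of_map
    refine ⟨ψ, hψ, (hψ_eq e₀ hae₀.symm).trans hge₀, fun e => ?_⟩
    by_cases he : e = a
    · exact he ▸ le_five_and_isBridge_of_mem_small_cut hψ hlt ha hrest
    · exact hrest e he
  · push Not at hsmall
    obtain ⟨ψ, hψ, hψe₀, hψ_le⟩ := exists_flow_of_three_edge_connected
      (fun S => (D.cut S).eq_empty_or_nonempty.imp_right (hsmall S)) e₀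
    exact ⟨ψ, hψ, hψe₀, fun e => (hψ_le e).imp_right fun hne h0 => absurd h0 hne⟩

end Seymour

section UnitFlow

variable [Fintype E] {D : Multidigraph V E} {x y : V}

/-- `D` with one further arc `none` from `y` to `x`. -/
def addArc (D : Multidigraph V E) (x y : V) : Multidigraph V (Option E) where
  src a := a.elim y D.src
  tgt a := a.elim x D.tgt

theorem boundary_addArc (f : Option E → A) :
    (D.addArc x y).boundary f =
      D.boundary (f ∘ some) + (Pi.single y (f none) - Pi.single x (f none)) := by
  ext v
  simp only [boundary_apply, sum_filter, Fintype.sum_option, addArc, Option.elim_none,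
    Option.elim_some, Function.comp_apply, Pi.add_apply, Pi.sub_apply, Pi.single_apply,
    eq_comm (a := v)]
  rw [add_sub_add_comm, add_comm]
  rfl

theorem some_mem_cut_addArc {S : Finset V} {e : E} :
    some e ∈ (D.addArc x y).cut S ↔ e ∈ D.cut S := by
  simp [addArc]

theorem exists_unit_flow [Finite V] (hxy : D.Linked Set.univ x y) :
    ∃ ψ : E → ℤ, D.boundary ψ = Pi.single x 1 - Pi.single y 1 ∧
      ∀ e, |ψ e| ≤ 5 ∧ (ψ e = 0 → D.IsBridge e) := by
  have hnone : ¬(D.addArc x y).IsBridge none := by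
    rintro ⟨S, hS⟩
    have hmem : none ∈ (D.addArc x y).cut S := by simp [hS]
    have hclosed : D.cut S = ∅ := eq_empty_of_forall_notMem fun e he => by
      rw [← some_mem_cut_addArc (x := x) (y := y), hS] at he
      simp at he
    exact (D.addArc x y).mem_cut.mp hmem (hxy S (isClosedUnder_univ.mpr hclosed)).symm
  obtain ⟨ψ, hψ, hone, hψ_le⟩ := exists_six_flow hnone
  refine ⟨ψ ∘ some, ?_, fun e => (hψ_le (some e)).imp_right fun h h0 => ?_⟩
  · rw [boundary_addArc, hone, add_eq_zero_iff_eq_neg, neg_sub] at hψ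
    exact hψ
  · obtain ⟨S, hS⟩ := h h0
    refine ⟨S, ext fun a => ?_⟩
    rw [← some_mem_cut_addArc (x := x) (y := y), hS]
    simp

end UnitFlow

section Residual

variable {D : Multidigraph V E} {ψ : E → ℤ}

/-- Some arc joins `u` and `v` along which one more unit can be sent from `u` to `v` without
cancelling flow of `ψ`. -/
def ResidualAdj (D : Multidigraph V E) (ψ : E → ℤ) (u v : V) : Prop :=
  ∃ e, (D.src e = u ∧ D.tgt e = v ∧ 0 ≤ ψ e) ∨ (D.src e = v ∧ D.tgt e = u ∧ ψ e ≤ 0)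

theorem sum_boundary_le_neg_card_cut [Fintype E] {S : Finset V}
    (hS : ∀ u ∈ S, ∀ v ∉ S, ¬D.ResidualAdj ψ u v) :
    ∑ v ∈ S, D.boundary ψ v ≤ -#(D.cut S) := by
  have hle : ∀ e ∈ D.cut S, (if D.src e ∈ S then ψ e else -ψ e) ≤ -1 := fun e he => by
    rw [mem_cut] at he
    split_ifs with hsrc
    · by_contra! hψ
      exact hS _ hsrc (D.tgt e) (by tauto) ⟨e, .inl ⟨rfl, rfl, by omega⟩⟩
    · by_contra! hψ
      exact hS (D.tgt e) (by tauto) _ hsrc ⟨e, .inr ⟨rfl, rfl, by omega⟩⟩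
  calc ∑ v ∈ S, D.boundary ψ v
      = ∑ e ∈ D.cut S, if D.src e ∈ S then ψ e else -ψ e := D.sum_boundary_eq_sum_cut ψ S
    _ ≤ ∑ e ∈ D.cut S, -1 := sum_le_sum hle
    _ = -#(D.cut S) := by simp

theorem exists_isPath_of_reflTransGen {G : SimpleGraph V} {R : V → V → Prop}
    (hR : ∀ ⦃u v⦄, R u v → G.Adj u v) {u v : V} (h : Relation.ReflTransGen R u v) :
    ∃ p : G.Walk u v, p.IsPath ∧ ∀ d ∈ p.darts, R d.fst d.snd := by
  obtain ⟨p, hp⟩ : ∃ p : G.Walk u v, ∀ d ∈ p.darts, R d.fst d.snd := by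
    induction h with
    | refl => exact ⟨.nil, by simp⟩
    | tail _ hstep ih =>
      obtain ⟨p, hp⟩ := ih
      exact ⟨p.concat (hR hstep), by simpa [or_imp, forall_and] using ⟨hp, hstep⟩⟩
  exact ⟨p.bypass, p.bypass_isPath, fun d hd => hp d (p.darts_bypass_subset_darts hd)⟩

theorem ResidualAdj.exists_single [Fintype E] {u v : V} (h : D.ResidualAdj ψ u v) :
    ∃ (e : E) (ε : ℤ), s(D.src e, D.tgt e) = s(u, v) ∧
      D.boundary (Pi.single e ε) = Pi.single u 1 - Pi.single v 1 ∧
      (ε = 1 ∧ 0 ≤ ψ e ∨ ε = -1 ∧ ψ e ≤ 0) := by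
  obtain ⟨e, ⟨rfl, rfl, hψ⟩ | ⟨rfl, rfl, hψ⟩⟩ := h
  · exact ⟨e, 1, rfl, D.boundary_single e 1, .inl ⟨rfl, hψ⟩⟩
  · refine ⟨e, -1, Sym2.eq_swap, ?_, .inr ⟨rfl, hψ⟩⟩
    rw [boundary_single, Pi.single_neg, Pi.single_neg]
    abel

theorem exists_path_flow [Fintype E] {G : SimpleGraph V} {u v : V} {p : G.Walk u v}
    (hp : p.IsPath) (hres : ∀ d ∈ p.darts, D.ResidualAdj ψ d.fst d.snd) :
    ∃ x : E → ℤ, D.boundary x = Pi.single u 1 - Pi.single v 1 ∧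
      (∀ e, x e ≠ 0 → s(D.src e, D.tgt e) ∈ p.edges) ∧
      ∀ e, x e = 0 ∨ (x e = 1 ∧ 0 ≤ ψ e) ∨ (x e = -1 ∧ ψ e ≤ 0) := by
  induction p with
  | nil => exact ⟨0, by simp, by simp, by simp⟩
  | @cons u w v h p ih =>
    obtain ⟨x, hx, hx_edges, hx_sign⟩ := ih hp.of_cons fun d hd => hres d (by simp [hd])
    obtain ⟨a, ε, ha, hε, hε_sign⟩ := (hres ⟨(u, w), h⟩ (by simp)).exists_single
    have hxa : x a = 0 := by
      by_contra hne
      exact ((Walk.isTrail_cons h p).mp hp.isTrail).2 (ha ▸ hx_edges a hne)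
    refine ⟨Pi.single a ε + x, ?_, fun e he => ?_, fun e => ?_⟩
    · rw [map_add, hx, hε]
      abel
    · rw [Walk.edges_cons, List.mem_cons]
      by_cases hea : e = a
      · exact .inl (hea ▸ ha)
      · exact .inr (hx_edges e (by simpa [hea] using he))
    · by_cases hea : e = a
      · simpa [hea, hxa] using .inr hε_sign
      · simpa [hea] using hx_sign e

end Residual

section PairDemand

/-- The net outflow asked for by two unit sources `x₁`, `y₁` and two unit sinks `x₂`, `y₂`. Up to a
scalar, this is what the negative edges `x₁y₁` and `x₂y₂` force on the positive edges. -/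
noncomputable def pairDemand (x₁ y₁ x₂ y₂ : V) : V → ℤ :=
  Pi.single x₁ 1 + Pi.single y₁ 1 - (Pi.single x₂ 1 + Pi.single y₂ 1)

variable {x₁ y₁ x₂ y₂ : V}

theorem pairDemand_swap_right : pairDemand x₁ y₁ x₂ y₂ = pairDemand x₁ y₁ y₂ x₂ := by
  simp only [pairDemand, add_comm]

theorem sum_pairDemand (S : Finset V) :
    ∑ v ∈ S, pairDemand x₁ y₁ x₂ y₂ v = (if x₁ ∈ S then 1 else 0) + (if y₁ ∈ S then 1 else 0) -
      ((if x₂ ∈ S then 1 else 0) + if y₂ ∈ S then 1 else 0) := by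
  simp [pairDemand, sum_add_distrib, sum_sub_distrib, sum_pi_single']

variable [Fintype E] {D : Multidigraph V E} {ψ₀ ψ : E → ℤ} {c : ℤ}

theorem sum_pairDemand_eq_zero_of_cut_eq_empty (hc : c ≠ 0)
    (hψ₀ : D.boundary ψ₀ = c • pairDemand x₁ y₁ x₂ y₂) {S : Finset V} (hS : D.cut S = ∅) :
    ∑ v ∈ S, pairDemand x₁ y₁ x₂ y₂ v = 0 := by
  have hsum := D.sum_boundary_eq_sum_cut ψ₀ S
  simpa [hψ₀, hS, ← mul_sum, hc] using hsum

theorem linked_or_linked_of_boundary_eq_smul_pairDemand [Finite V] (hc : c ≠ 0)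
    (hψ₀ : D.boundary ψ₀ = c • pairDemand x₁ y₁ x₂ y₂) :
    D.Linked Set.univ x₁ x₂ ∨ D.Linked Set.univ x₁ y₂ := by
  have := Fintype.ofFinite V
  have hsum := sum_pairDemand_eq_zero_of_cut_eq_empty hc hψ₀
    (isClosedUnder_univ.mp (isClosedUnder_component (D := D) x₁))
  rw [← mem_component, ← mem_component]
  by_contra! hnot
  simp only [sum_pairDemand, self_mem_component, hnot, if_true, if_false] at hsum
  split_ifs at hsum <;> omega

/-- If `S` is the set of vertices reachable from `y₁`, the net outflow of `ψ` from `S` is at most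
`-#(D.cut S)` and at least `-1`, so at most one arc crosses `S`; the nowhere-zero `ψ₀` then forces
`y₂ ∈ S`. -/
theorem reflTransGen_residualAdj [Finite V] (hc : c ≠ 0) (hne : ∀ e, ψ₀ e ≠ 0)
    (hψ₀ : D.boundary ψ₀ = c • pairDemand x₁ y₁ x₂ y₂) (hlink : D.Linked Set.univ x₁ x₂)
    (hψ : D.boundary ψ = Pi.single x₁ 1 - Pi.single x₂ 1) :
    Relation.ReflTransGen (D.ResidualAdj ψ) y₁ y₂ := by
  have := Fintype.ofFinite V
  by_contra hy₂
  let S : Finset V := {v | Relation.ReflTransGen (D.ResidualAdj ψ) y₁ v}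
  have hy₁S : y₁ ∈ S := mem_filter.mpr ⟨mem_univ _, .refl⟩
  have hy₂S : y₂ ∉ S := fun h => hy₂ (mem_filter.mp h).2
  have hcard : ((if x₁ ∈ S then 1 else 0) - (if x₂ ∈ S then 1 else 0) : ℤ) ≤ -#(D.cut S) := by
    have hle := sum_boundary_le_neg_card_cut (D := D) (ψ := ψ) (S := S) fun u hu v hv huv =>
      hv (mem_filter.mpr ⟨mem_univ _, (mem_filter.mp hu).2.tail huv⟩)
    simpa [hψ, sum_sub_distrib, sum_pi_single'] using hle
  have hdemand := sum_pairDemand (x₁ := x₁) (y₁ := y₁) (x₂ := x₂) (y₂ := y₂) S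
  by_cases hcut : D.cut S = ∅
  · rw [sum_pairDemand_eq_zero_of_cut_eq_empty hc hψ₀ hcut] at hdemand
    simp [hy₁S, hy₂S, hlink S (isClosedUnder_univ.mpr hcut)] at hdemand
  · have hpos : 0 < #(D.cut S) := card_pos.mpr (nonempty_iff_ne_empty.mpr hcut)
    have hx₁S : x₁ ∉ S := fun h => by rw [if_pos h] at hcard; split_ifs at hcard <;> omega
    have hx₂S : x₂ ∈ S := by by_contra h; rw [if_neg h, if_neg hx₁S] at hcard; omega
    simp only [hx₁S, hx₂S, if_true, if_false] at hcard
    obtain ⟨e, he⟩ := card_eq_one.mp (show #(D.cut S) = 1 by omega)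
    refine hne e (D.eq_zero_of_cut_eq_singleton he ?_)
    simp [hψ₀, ← mul_sum, hdemand, hx₁S, hx₂S, hy₁S, hy₂S]

theorem ne_zero_of_isBridge {β : V → ℤ} (hψ₀ : D.boundary ψ₀ = c • β) (hψ : D.boundary ψ = β)
    {e : E} (he : D.IsBridge e) (hne : ψ₀ e ≠ 0) : ψ e ≠ 0 := by
  have hdiff : (ψ₀ - c • ψ) e = 0 :=
    he.eq_zero_of_boundary_eq_zero (by rw [map_sub, map_zsmul, hψ₀, hψ, sub_self])
  rintro h0
  simp [h0, hne] at hdiff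

theorem exists_seven_flow [Finite V] {G : SimpleGraph V}
    (hG : ∀ e, G.Adj (D.src e) (D.tgt e)) (hc : c ≠ 0) (hne : ∀ e, ψ₀ e ≠ 0)
    (hψ₀ : D.boundary ψ₀ = c • pairDemand x₁ y₁ x₂ y₂) :
    ∃ f : E → ℤ, D.boundary f = pairDemand x₁ y₁ x₂ y₂ ∧ (∀ e, f e ≠ 0 ∧ |f e| ≤ 6) ∧
      ∃ (a b : V) (p : G.Walk a b), p.IsPath ∧
        ∀ e, |f e| = 6 → s(D.src e, D.tgt e) ∈ p.edges := by
  wlog hlink : D.Linked Set.univ x₁ x₂ generalizing x₂ y₂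
  · rw [pairDemand_swap_right] at hψ₀ ⊢
    exact this hψ₀ ((linked_or_linked_of_boundary_eq_smul_pairDemand hc hψ₀).resolve_right hlink)
  obtain ⟨ψ, hψ, hψ_le⟩ := exists_unit_flow hlink
  have hadj : ∀ ⦃u v⦄, D.ResidualAdj ψ u v → G.Adj u v := by
    rintro u v ⟨e, ⟨rfl, rfl, -⟩ | ⟨rfl, rfl, -⟩⟩
    exacts [hG e, (hG e).symm]
  obtain ⟨p, hp, hres⟩ :=
    exists_isPath_of_reflTransGen hadj (reflTransGen_residualAdj hc hne hψ₀ hlink hψ)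
  obtain ⟨x, hx, hx_edges, hx_sign⟩ := exists_path_flow hp hres
  have hf : D.boundary (ψ + x) = pairDemand x₁ y₁ x₂ y₂ := by
    rw [map_add, hψ, hx, pairDemand]
    abel
  refine ⟨ψ + x, hf, fun e => ⟨?_, ?_⟩, y₁, y₂, p, hp, fun e he => hx_edges e fun h0 => ?_⟩
  · by_cases h0 : ψ e = 0
    · exact ne_zero_of_isBridge hψ₀ hf ((hψ_le e).2 h0) (hne e)
    · have := hx_sign e
      rw [Pi.add_apply]
      omega
  · have hψe := abs_le.mp (hψ_le e).1
    have := hx_sign e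
    rw [Pi.add_apply, abs_le]
    omega
  · have := (hψ_le e).1
    rw [Pi.add_apply, h0, add_zero] at he
    omega

end PairDemand

section OfEdges

/-- The edges in `F`, each directed as its representative in `V × V` happens to be. -/
noncomputable def ofEdges (F : Set (Sym2 V)) : Multidigraph V F where
  src e := (Quot.out e.1).1
  tgt e := (Quot.out e.1).2

variable {F : Set (Sym2 V)}

theorem mk_src_tgt_ofEdges (e : F) : s((ofEdges F).src e, (ofEdges F).tgt e) = e :=
  Quot.out_eq e.1

theorem adj_ofEdges {G : SimpleGraph V} (hF : F ⊆ G.edgeSet) (e : F) :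
    G.Adj ((ofEdges F).src e) ((ofEdges F).tgt e) := by
  rw [← mem_edgeSet, mk_src_tgt_ofEdges]
  exact hF e.2

end OfEdges

end Multidigraph

section SignedGraph

open Multidigraph

variable {G : SimpleGraph V} {σ : Sym2 V → ℤ} {τ : V → Sym2 V → ℤ} {φ : Sym2 V → ℤ}

/-- The positive edges of the signed graph `(G, σ)`. -/
def PosEdges (G : SimpleGraph V) (σ : Sym2 V → ℤ) : Set (Sym2 V) :=
  {e | e ∈ G.edgeSet ∧ σ e = 1}

theorem posEdges_subset_edgeSet : PosEdges G σ ⊆ G.edgeSet :=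
  fun _ he => he.1

theorem notMem_posEdges_of_mem_negEdges {e : Sym2 V} (he : e ∈ NegEdges G σ) :
    e ∉ PosEdges G σ := fun hpos => by
  have := he.2.symm.trans hpos.2
  omega

theorem IsSignature.mem_posEdges_or_mem_negEdges (hσ : IsSignature G σ) {e : Sym2 V}
    (he : e ∈ G.edgeSet) : e ∈ PosEdges G σ ∨ e ∈ NegEdges G σ :=
  (hσ e he).imp (⟨he, ·⟩) (⟨he, ·⟩)

theorem IsOrientation.apply_ne_zero (hτ : IsOrientation G σ τ) (v : V) (e : Sym2 V) :
    τ v e ≠ 0 := by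
  rcases hτ.1 v e with h | h <;> simp [h]

theorem IsOrientation.apply_eq_neg_mul (hτ : IsOrientation G σ τ) {u v : V} (huv : G.Adj u v) :
    τ v s(u, v) = -σ s(u, v) * τ u s(u, v) := by
  rw [← hτ.2 u v huv]
  rcases hτ.1 u s(u, v) with h | h <;> simp [h]

theorem ite_mem_mk_eq_single_add_single {x y : V} (hxy : x ≠ y) (g : V → ℤ) (v : V) :
    (if v ∈ s(x, y) then g v else 0) = (Pi.single x (g x) + Pi.single y (g y) : V → ℤ) v := by
  rw [Pi.add_apply, Pi.single_apply, Pi.single_apply]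
  by_cases hx : v = x
  · simp [hx, hxy]
  · by_cases hy : v = y <;> simp [hx, hy, hxy.symm]

theorem IsOrientation.ite_mem_negEdge (hτ : IsOrientation G σ τ) {x y : V}
    (hxy : s(x, y) ∈ NegEdges G σ) (v : V) :
    (if v ∈ s(x, y) then τ v s(x, y) * φ s(x, y) else 0) =
      τ x s(x, y) * φ s(x, y) * (Pi.single x 1 + Pi.single y 1 : V → ℤ) v := by
  have hadj : G.Adj x y := hxy.1
  rw [ite_mem_mk_eq_single_add_single hadj.ne (fun w => τ w s(x, y) * φ s(x, y)),
    hτ.apply_eq_neg_mul hadj, hxy.2]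
  simp [Pi.single_apply, mul_add]

/-- The flow that `(τ, φ)` sends through each positive edge in the direction of `ofEdges`. -/
noncomputable def arcFlow (G : SimpleGraph V) (σ : Sym2 V → ℤ) (τ : V → Sym2 V → ℤ)
    (φ : Sym2 V → ℤ) (e : PosEdges G σ) : ℤ :=
  -(τ ((ofEdges (PosEdges G σ)).src e) e * φ e)

/-- The orientation that directs positive edges as in `ofEdges` and makes the negative edge `n`
introverted and all other negative edges extroverted; its values off the edges of
`G` are irrelevant. -/
noncomputable def inducedOrientation (G : SimpleGraph V) (σ : Sym2 V → ℤ) (n : Sym2 V) (v : V) :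
    Sym2 V → ℤ :=
  Function.extend Subtype.val
    (fun e : PosEdges G σ => if v = (ofEdges (PosEdges G σ)).src e then -1 else 1)
    (fun e => if e = n then 1 else -1)

/-- The edge valuation that extends a valuation of the positive edges by `1`. -/
noncomputable def extendByOne (f : PosEdges G σ → ℤ) : Sym2 V → ℤ :=
  Function.extend Subtype.val f 1

theorem inducedOrientation_coe (n : Sym2 V) (v : V) (e : PosEdges G σ) :
    inducedOrientation G σ n v e = if v = (ofEdges (PosEdges G σ)).src e then -1 else 1 :=
  Subtype.val_injective.extend_apply _ _ e

theorem inducedOrientation_of_mem_negEdges {n e : Sym2 V} (he : e ∈ NegEdges G σ) (v : V) :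
    inducedOrientation G σ n v e = if e = n then 1 else -1 :=
  Function.extend_apply' _ _ e (by simpa using notMem_posEdges_of_mem_negEdges he)

theorem extendByOne_coe (f : PosEdges G σ → ℤ) (e : PosEdges G σ) : extendByOne f e = f e :=
  Subtype.val_injective.extend_apply _ _ e

theorem extendByOne_of_mem_negEdges (f : PosEdges G σ → ℤ) {e : Sym2 V} (he : e ∈ NegEdges G σ) :
    extendByOne f e = 1 :=
  Function.extend_apply' _ _ e (by simpa using notMem_posEdges_of_mem_negEdges he)

theorem arcFlow_inducedOrientation_extendByOne (n : Sym2 V) (f : PosEdges G σ → ℤ) :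
    arcFlow G σ (inducedOrientation G σ n) (extendByOne f) = f := by
  ext e
  simp [arcFlow, inducedOrientation_coe, extendByOne_coe]

theorem inducedOrientation_eq_one_or (n : Sym2 V) (v : V) (e : Sym2 V) :
    inducedOrientation G σ n v e = 1 ∨ inducedOrientation G σ n v e = -1 := by
  simp only [inducedOrientation, Function.extend]
  split_ifs <;> simp

theorem IsSignature.isOrientation_inducedOrientation (hσ : IsSignature G σ) (n : Sym2 V) :
    IsOrientation G σ (inducedOrientation G σ n) := by
  refine ⟨inducedOrientation_eq_one_or n, fun u v huv => ?_⟩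
  rcases hσ.mem_posEdges_or_mem_negEdges (G.mem_edgeSet.mpr huv) with hpos | hneg
  · have hne := (adj_ofEdges posEdges_subset_edgeSet ⟨s(u, v), hpos⟩).ne
    have hends := mk_src_tgt_ofEdges ⟨s(u, v), hpos⟩
    rw [hpos.2, inducedOrientation_coe n u ⟨_, hpos⟩, inducedOrientation_coe n v ⟨_, hpos⟩]
    rcases Sym2.eq_iff.mp hends with ⟨hu, hv⟩ | ⟨hv, hu⟩
    · rw [hu, hv] at hne
      rw [hu, if_pos rfl, if_neg hne.symm]
      rfl
    · rw [hv, hu] at hne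
      rw [hv, if_pos rfl, if_neg hne.symm]
      rfl
  · rw [hneg.2, inducedOrientation_of_mem_negEdges hneg, inducedOrientation_of_mem_negEdges hneg]
    split_ifs <;> rfl

theorem IsSignature.abs_extendByOne_lt (hσ : IsSignature G σ) {k : ℤ} (hk : 1 < k)
    {f : PosEdges G σ → ℤ} (hf : ∀ e, f e ≠ 0 ∧ |f e| < k) {e : Sym2 V} (he : e ∈ G.edgeSet) :
    0 < |extendByOne f e| ∧ |extendByOne f e| < k := by
  rcases hσ.mem_posEdges_or_mem_negEdges he with hpos | hneg
  · rw [extendByOne_coe f ⟨e, hpos⟩]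
    exact (hf _).imp_left abs_pos.mpr
  · simpa [extendByOne_of_mem_negEdges f hneg] using hk

variable [Fintype V]

theorem sum_ite_adj_eq_sum_edgeFinset (g : Sym2 V → ℤ) (v : V) :
    (∑ w, if G.Adj v w then g s(v, w) else 0) = ∑ e ∈ G.edgeFinset, if v ∈ e then g e else 0 := by
  rw [← sum_filter, ← sum_filter]
  refine sum_nbij (fun w => s(v, w)) (by simp) (fun _ _ _ _ => Sym2.congr_right.mp)
    (fun e he => ?_) (by simp)
  simp only [coe_filter, mem_edgeFinset, Set.mem_ofPred_eq] at he
  obtain ⟨hadj, w, rfl⟩ := he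
  exact ⟨w, by simpa using hadj, rfl⟩

theorem IsSignature.sum_edgeFinset (hσ : IsSignature G σ) {n₁ n₂ : Sym2 V} (hne : n₁ ≠ n₂)
    (hN : NegEdges G σ = {n₁, n₂}) (g : Sym2 V → ℤ) :
    ∑ e ∈ G.edgeFinset, g e = ∑ e : PosEdges G σ, g e + (g n₁ + g n₂) := by
  have hunion : G.edgeFinset = (PosEdges G σ).toFinset ∪ {n₁, n₂} := by
    ext e
    have hneg : e ∈ NegEdges G σ ↔ e = n₁ ∨ e = n₂ := by simp [hN]
    simp only [mem_edgeFinset, mem_union, Set.mem_toFinset, mem_insert, mem_singleton, ← hneg]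
    exact ⟨hσ.mem_posEdges_or_mem_negEdges, fun h => h.elim (·.1) (·.1)⟩
  have hdisj : Disjoint (PosEdges G σ).toFinset {n₁, n₂} := by
    refine Finset.disjoint_right.mpr fun e he => ?_
    rw [Set.mem_toFinset]
    exact notMem_posEdges_of_mem_negEdges (by simpa [hN] using he)
  rw [hunion, sum_union hdisj, sum_pair hne, sum_set_coe]

theorem IsOrientation.sum_posEdges (hτ : IsOrientation G σ τ) (v : V) :
    (∑ e : PosEdges G σ, if v ∈ e.1 then τ v e * φ e else 0) =
      -(ofEdges (PosEdges G σ)).boundary (arcFlow G σ τ φ) v := by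
  simp only [boundary_apply, sum_filter, ← sum_sub_distrib, ← sum_neg_distrib]
  refine sum_congr rfl fun e _ => ?_
  have hadj := adj_ofEdges posEdges_subset_edgeSet e
  have htgt := hτ.apply_eq_neg_mul hadj
  have hends := ite_mem_mk_eq_single_add_single hadj.ne (fun w => τ w e * φ e) v
  simp only [mk_src_tgt_ofEdges, e.2.2] at htgt hends
  rw [hends, Pi.add_apply, htgt]
  simp only [Pi.single_apply, arcFlow, eq_comm (b := v)]
  split_ifs <;> ring

variable {x₁ y₁ x₂ y₂ : V}

theorem IsOrientation.sum_ite_adj (hτ : IsOrientation G σ τ) (hσ : IsSignature G σ)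
    (hne : s(x₁, y₁) ≠ s(x₂, y₂)) (hN : NegEdges G σ = {s(x₁, y₁), s(x₂, y₂)}) (v : V) :
    (∑ w, if G.Adj v w then τ v s(v, w) * φ s(v, w) else 0) =
      -(ofEdges (PosEdges G σ)).boundary (arcFlow G σ τ φ) v +
        (τ x₁ s(x₁, y₁) * φ s(x₁, y₁) * (Pi.single x₁ 1 + Pi.single y₁ 1 : V → ℤ) v +
          τ x₂ s(x₂, y₂) * φ s(x₂, y₂) * (Pi.single x₂ 1 + Pi.single y₂ 1 : V → ℤ) v) := by
  rw [sum_ite_adj_eq_sum_edgeFinset (fun e => τ v e * φ e), hσ.sum_edgeFinset hne hN,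
    hτ.sum_posEdges, hτ.ite_mem_negEdge (by simp [hN]), hτ.ite_mem_negEdge (by simp [hN])]

/-- Summed over all vertices the boundary vanishes, so the two negative edges inject opposite
amounts. -/
theorem IsNZFlow.exists_boundary_arcFlow_eq {k : ℤ} (h : IsNZFlow G σ k τ φ)
    (hσ : IsSignature G σ) (hne : s(x₁, y₁) ≠ s(x₂, y₂))
    (hN : NegEdges G σ = {s(x₁, y₁), s(x₂, y₂)}) :
    ∃ c : ℤ, c ≠ 0 ∧ (ofEdges (PosEdges G σ)).boundary (arcFlow G σ τ φ) =
      c • pairDemand x₁ y₁ x₂ y₂ := by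
  obtain ⟨⟨hτ, hK⟩, hnz⟩ := h
  set c := τ x₁ s(x₁, y₁) * φ s(x₁, y₁) with hc
  set d := τ x₂ s(x₂, y₂) * φ s(x₂, y₂) with hd
  have hboundary : ∀ v, (ofEdges (PosEdges G σ)).boundary (arcFlow G σ τ φ) v =
      c * (Pi.single x₁ 1 + Pi.single y₁ 1 : V → ℤ) v +
        d * (Pi.single x₂ 1 + Pi.single y₂ 1 : V → ℤ) v := fun v => by
    have hv := hK v
    rw [hτ.sum_ite_adj hσ hne hN, ← hc, ← hd] at hv
    omega
  have hdc : d = -c := by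
    have hsum := (ofEdges (PosEdges G σ)).sum_univ_boundary (arcFlow G σ τ φ)
    simp only [hboundary, sum_add_distrib, ← mul_sum, Pi.add_apply, sum_pi_single', mem_univ,
      if_true] at hsum
    omega
  have hn₁ : s(x₁, y₁) ∈ NegEdges G σ := by simp [hN]
  refine ⟨c, mul_ne_zero (hτ.apply_ne_zero _ _) (abs_pos.mp (hnz _ hn₁.1).1), ?_⟩
  ext v
  rw [hboundary, hdc]
  simp only [pairDemand, Pi.smul_apply, Pi.sub_apply, smul_eq_mul]
  ring

theorem IsNZFlow.arcFlow_ne_zero {k : ℤ} (h : IsNZFlow G σ k τ φ) (e : PosEdges G σ) :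
    arcFlow G σ τ φ e ≠ 0 :=
  neg_ne_zero.mpr <| mul_ne_zero (h.1.1.apply_ne_zero _ _) (abs_pos.mp (h.2 e e.2.1).1)

theorem IsSignature.isFlow_inducedOrientation (hσ : IsSignature G σ)
    (hne : s(x₁, y₁) ≠ s(x₂, y₂)) (hN : NegEdges G σ = {s(x₁, y₁), s(x₂, y₂)})
    {f : PosEdges G σ → ℤ}
    (hf : (ofEdges (PosEdges G σ)).boundary f = pairDemand x₁ y₁ x₂ y₂) :
    IsFlow G σ (inducedOrientation G σ s(x₁, y₁)) (extendByOne f) := by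
  have hn₁ : s(x₁, y₁) ∈ NegEdges G σ := by simp [hN]
  have hn₂ : s(x₂, y₂) ∈ NegEdges G σ := by simp [hN]
  have hτ := hσ.isOrientation_inducedOrientation s(x₁, y₁)
  refine ⟨hτ, fun v => ?_⟩
  rw [hτ.sum_ite_adj hσ hne hN, arcFlow_inducedOrientation_extendByOne, hf,
    extendByOne_of_mem_negEdges f hn₁, extendByOne_of_mem_negEdges f hn₂,
    inducedOrientation_of_mem_negEdges hn₁, inducedOrientation_of_mem_negEdges hn₂,
    if_pos rfl, if_neg hne.symm, pairDemand, Pi.sub_apply]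
  ring

end SignedGraph

theorem stmt17_general [Fintype V] (G : SimpleGraph V) (σ : Sym2 V → ℤ)
    (hσ : IsSignature G σ) (hadm : FlowAdmissible G σ)
    (n₁ n₂ : Sym2 V) (hne : n₁ ≠ n₂) (hN : NegEdges G σ = {n₁, n₂}) :
    ∃ τ φ, IsNZFlow G σ 7 τ φ ∧ φ n₁ = 1 ∧ φ n₂ = 1 ∧
      ∃ (a b : V) (p : G.Walk a b), p.IsPath ∧
        ∀ e ∈ G.edgeSet, |φ e| = 6 → e ∈ p.edges := by
  induction n₁ with | _ x₁ y₁
  induction n₂ with | _ x₂ y₂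
  obtain ⟨k, τ, φ, hflow⟩ := hadm
  obtain ⟨c, hc, hboundary⟩ := hflow.exists_boundary_arcFlow_eq hσ hne hN
  obtain ⟨f, hf, hf_le, a, b, p, hp, hsix⟩ := Multidigraph.exists_seven_flow
    (Multidigraph.adj_ofEdges posEdges_subset_edgeSet) hc hflow.arcFlow_ne_zero hboundary
  have hlt : ∀ e, f e ≠ 0 ∧ |f e| < 7 := fun e => (hf_le e).imp_right Int.lt_add_one_of_le
  refine ⟨inducedOrientation G σ s(x₁, y₁), extendByOne f,
    ⟨hσ.isFlow_inducedOrientation hne hN hf, fun e => hσ.abs_extendByOne_lt (by norm_num) hlt⟩,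
    extendByOne_of_mem_negEdges f (by simp [hN]), extendByOne_of_mem_negEdges f (by simp [hN]),
    a, b, p, hp, fun e he he_six => ?_⟩
  rcases hσ.mem_posEdges_or_mem_negEdges he with hpos | hneg
  · rw [extendByOne_coe f ⟨e, hpos⟩] at he_six
    simpa only [Multidigraph.mk_src_tgt_ofEdges] using hsix ⟨e, hpos⟩ he_six
  · simp [extendByOne_of_mem_negEdges f hneg] at he_six

/-- Every flow-admissible signed cubic graph with exactly two negative
edges admits a nowhere-zero 7-flow with value 1 on both negative edges such that all
edges with flow value 6 lie on a single path. -/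
theorem stmt17 [Fintype V] (G : SimpleGraph V) (σ : Sym2 V → ℤ)
    (hσ : IsSignature G σ) (hcubic : CubicGraph G) (hadm : FlowAdmissible G σ)
    (n₁ n₂ : Sym2 V) (hne : n₁ ≠ n₂) (hN : NegEdges G σ = {n₁, n₂}) :
    ∃ τ φ, IsNZFlow G σ 7 τ φ ∧ φ n₁ = 1 ∧ φ n₂ = 1 ∧
      ∃ (a b : V) (p : G.Walk a b), p.IsPath ∧
        ∀ e ∈ G.edgeSet, |φ e| = 6 → e ∈ p.edges := by
  exact stmt17_general G σ hσ hadm n₁ n₂ hne hN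
end

section
/- Assume every bridgeless graph admits a nowhere-zero 5-flow (Tutte's 5-flow conjecture). Then every bridgeless flow-admissible signed graph (G, σ) with exactly two negative edges n₁, n₂ admits a nowhere-zero 6-flow (D, φ) with φ(e) > 0 for all e, φ(n₁) = φ(n₂) = 1, and there is a path P with φ⁻¹(5) ⊆ E(P) and φ⁻¹(1) ∩ E(P) = ∅. -/
open Finset SimpleGraph

attribute [local instance] Classical.propDecidable

variable {V : Type}

/-!
A flow on a signed graph is handled through its values on half-edges; switching at a vertex set `S`
negates the half-edges outside `S` and exchanges the signs of the edges in the cut `δ(S)`.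

Tutte's conjecture yields a nowhere-zero 5-flow with value `1` on a prescribed edge: multiply by a
unit modulo 5, reduce, and repair the integral divergence by pushing 5 units along directed paths
that avoid the prescribed edge.

If `{n₁, n₂}` is an edge cut, switching at one side makes all edges positive and such a 5-flow
suffices. Otherwise replace `n₁ = x₁y₁` and `n₂ = x₂y₂` by a positive edge `x₁x₂`, and take a 5-flow
of value `1` there. A cut counting argument gives a directed path from `y₂` to `y₁`. Sending one
more unit along it and giving `n₁`, `n₂` the value `1` raises the values on the path by one, so that
`5` occurs only, and `1` never, on the path.

The graph with the edge `x₁x₂` can fail to be bridgeless only because of a 2-edge-cut consisting of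
some `nᵢ` and a positive edge, with `xᵢ` and the other negative edge on the same side. Switching at
such a cut with inclusion-minimal side moves the negative edge to the other edge of the cut, and by
uncrossing no such obstruction remains there.
-/

section EdgeCut

/-- The edge cut `δ(S)`: the edges of `G` with one end in `S` and one end outside. Unlike in
`IsEdgeCut`, the side `S` is part of the data and may be empty or everything. -/
def edgeCut (G : SimpleGraph V) (S : Set V) : Set (Sym2 V) :=
  {e | e ∈ G.edgeSet ∧ (∃ v ∈ e, v ∈ S) ∧ ∃ v ∈ e, v ∉ S}

variable {G : SimpleGraph V} {S T : Set V} {e : Sym2 V} {u v : V}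

lemma mk_mem_edgeCut : s(u, v) ∈ edgeCut G S ↔ G.Adj u v ∧ ¬(u ∈ S ↔ v ∈ S) := by
  simp only [edgeCut, Set.mem_ofPred_eq, mem_edgeSet, Sym2.mem_iff, exists_eq_or_imp,
    exists_eq_left]
  tauto

lemma exists_adj_of_mem_edgeCut (he : e ∈ edgeCut G S) :
    ∃ u ∈ S, ∃ v ∉ S, G.Adj u v ∧ e = s(u, v) := by
  induction e with | _ u v =>
  obtain ⟨huv, hS⟩ := mk_mem_edgeCut.1 he
  by_cases hu : u ∈ S
  · exact ⟨u, hu, v, by tauto, huv, rfl⟩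
  · exact ⟨v, by tauto, u, hu, huv.symm, Sym2.eq_swap⟩

lemma edgeCut_compl (G : SimpleGraph V) (S : Set V) : edgeCut G Sᶜ = edgeCut G S := by
  ext e
  induction e with | _ u v => simp only [mk_mem_edgeCut, Set.mem_compl_iff, not_iff_not]

lemma edgeCut_inter_subset : edgeCut G (S ∩ T) ⊆ edgeCut G S ∪ edgeCut G T := by
  intro e
  induction e with | _ u v =>
  simp only [Set.mem_union, mk_mem_edgeCut, Set.mem_inter_iff]
  tauto

lemma forall_mem_of_notMem_edgeCut (he : e ∈ G.edgeSet) (hS : e ∉ edgeCut G S) {x : V}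
    (hx : x ∈ e) (hxS : x ∈ S) : ∀ v ∈ e, v ∈ S := by
  by_contra! hv
  obtain ⟨v, hve, hvS⟩ := hv
  exact hS ⟨he, ⟨x, hx, hxS⟩, v, hve, hvS⟩

lemma edgeCut_sdiff_subset : edgeCut G (S \ T) ⊆ edgeCut G S ∪ edgeCut G T := by
  rw [Set.sdiff_eq, ← edgeCut_compl G T]
  exact edgeCut_inter_subset

lemma mem_edgeCut_sdiff_of_forall_notMem (he : e ∈ edgeCut G S) (heT : ∀ v ∈ e, v ∉ T) :
    e ∈ edgeCut G (S \ T) ∧ e ∉ edgeCut G (T \ S) := by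
  induction e with | _ u v =>
  simp only [mk_mem_edgeCut, Set.mem_sdiff, Sym2.mem_iff, forall_eq_or_imp, forall_eq] at *
  tauto

lemma mem_edgeCut_sdiff_of_forall_mem (he : e ∈ edgeCut G S) (heT : ∀ v ∈ e, v ∈ T) :
    e ∈ edgeCut G (T \ S) ∧ e ∉ edgeCut G (S \ T) := by
  induction e with | _ u v =>
  simp only [mk_mem_edgeCut, Set.mem_sdiff, Sym2.mem_iff, forall_eq_or_imp, forall_eq] at *
  tauto

lemma notMem_edgeCut_sdiff_of_mem (he : e ∈ edgeCut G (T \ S)) (heS : e ∉ edgeCut G S) :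
    e ∉ edgeCut G (S \ T) := by
  induction e with | _ u v =>
  simp only [mk_mem_edgeCut, Set.mem_sdiff] at *
  tauto

lemma edgeCut_deleteEdges (D : Set (Sym2 V)) :
    edgeCut (G.deleteEdges D) S = edgeCut G S \ D := by
  ext e
  induction e with | _ u v =>
  simp only [mk_mem_edgeCut, deleteEdges_adj, Set.mem_sdiff]
  tauto

lemma edgeCut_setOf_reachable (G : SimpleGraph V) (u : V) :
    edgeCut G {v | G.Reachable u v} = ∅ := by
  refine Set.eq_empty_of_forall_notMem fun e he => ?_
  obtain ⟨v, hv, w, hw, hvw, -⟩ := exists_adj_of_mem_edgeCut he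
  exact hw (Reachable.trans hv hvw.reachable)

lemma mem_of_reachable_of_edgeCut_eq_empty (hS : edgeCut G S = ∅) (huv : G.Reachable u v)
    (hu : u ∈ S) : v ∈ S := by
  obtain ⟨p⟩ := huv
  induction p with
  | nil => exact hu
  | @cons u w _ huw _ ih =>
    by_contra hv
    have : s(u, w) ∈ edgeCut G S := mk_mem_edgeCut.2 ⟨huw, by tauto⟩
    simp [hS] at this

lemma bridgeless_iff_edgeCut_ne_singleton :
    Bridgeless G ↔ ∀ S e, edgeCut G S ≠ {e} := by
  constructor
  · intro hG S e hS
    obtain ⟨u, hu, v, hv, huv, rfl⟩ := exists_adj_of_mem_edgeCut (hS ▸ rfl : e ∈ edgeCut G S)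
    have hreach : (G.deleteEdges {s(u, v)}).Reachable u v := by
      simpa only [isBridge_iff, not_not] using hG s(u, v) huv
    refine hv (mem_of_reachable_of_edgeCut_eq_empty ?_ hreach hu)
    rw [edgeCut_deleteEdges, hS, Set.sdiff_self]
  · intro hG e he hbridge
    induction e with | _ u v =>
    rw [isBridge_iff] at hbridge
    set S := {w | (G.deleteEdges {s(u, v)}).Reachable u w}
    refine hG S s(u, v) (Set.Subset.antisymm ?_ ?_)
    · rw [← Set.sdiff_eq_empty, ← edgeCut_deleteEdges, edgeCut_setOf_reachable]
    · have hu : u ∈ S := Reachable.refl u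
      exact Set.singleton_subset_iff.2 (mk_mem_edgeCut.2 ⟨he, by tauto⟩)

end EdgeCut

section AttachPath

/-- `H` together with a new path of length three from `a` to `b`. It plays the role of a new edge
`ab`, which a simple graph cannot carry when `a = b` or when `a` and `b` are already adjacent. -/
def attachPath (H : SimpleGraph V) (a b : V) : SimpleGraph (V ⊕ Bool) :=
  (H ⊕g ⊤) ⊔ edge (.inl a) (.inr false) ⊔ edge (.inl b) (.inr true)

variable {H : SimpleGraph V} {a b u v : V}

@[simp]
lemma attachPath_adj_inl_inl : (attachPath H a b).Adj (.inl u) (.inl v) ↔ H.Adj u v := by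
  simp [attachPath, edge_adj]

@[simp]
lemma attachPath_adj_inl_inr {i : Bool} :
    (attachPath H a b).Adj (.inl u) (.inr i) ↔ u = cond i b a := by
  cases i <;> simp [attachPath, edge_adj, eq_comm]

@[simp]
lemma attachPath_adj_inr_inr {i j : Bool} :
    (attachPath H a b).Adj (.inr i) (.inr j) ↔ i ≠ j := by
  simp [attachPath, edge_adj]

lemma mem_edgeCut_attachPath {S : Set (V ⊕ Bool)} {e : Sym2 (V ⊕ Bool)} :
    e ∈ edgeCut (attachPath H a b) S ↔
      (∃ e' ∈ edgeCut H (Sum.inl ⁻¹' S), e'.map Sum.inl = e) ∨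
      (¬(.inl a ∈ S ↔ .inr false ∈ S) ∧ e = s(.inl a, .inr false)) ∨
      (¬(.inr false ∈ S ↔ .inr true ∈ S) ∧ e = s(.inr false, .inr true)) ∨
      (¬(.inl b ∈ S ↔ .inr true ∈ S) ∧ e = s(.inl b, .inr true)) := by
  constructor
  · intro he
    induction e with | _ u v =>
    obtain ⟨huv, hS⟩ := mk_mem_edgeCut.1 he
    rcases u with u | _ | _ <;> rcases v with v | _ | _ <;>
      simp only [attachPath_adj_inl_inl, attachPath_adj_inl_inr, attachPath_adj_inr_inr,
        (attachPath H a b).adj_comm (.inr _) (.inl _), cond_true, cond_false, ne_eq,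
        not_true_eq_false] at huv
    · exact .inl ⟨s(u, v), mk_mem_edgeCut.2 ⟨huv, hS⟩, rfl⟩
    all_goals
      subst_vars
      simp only [Sym2.eq_iff, Sum.inl.injEq, Sum.inr.injEq, reduceCtorEq, Bool.false_eq_true,
        Bool.true_eq_false]
      tauto
  · rintro (⟨e', he', rfl⟩ | ⟨hS, rfl⟩ | ⟨hS, rfl⟩ | ⟨hS, rfl⟩)
    · induction e' with | _ u v =>
      obtain ⟨huv, hS⟩ := mk_mem_edgeCut.1 he'
      exact mk_mem_edgeCut.2 ⟨attachPath_adj_inl_inl.2 huv, hS⟩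
    all_goals exact mk_mem_edgeCut.2 ⟨by simp, hS⟩

theorem bridgeless_attachPath
    (hsep : ∀ S, a ∈ S → b ∉ S → (edgeCut H S).Nonempty)
    (hbridge : ∀ S e, a ∈ S → edgeCut H S = {e} → b ∉ S) :
    Bridgeless (attachPath H a b) := by
  refine bridgeless_iff_edgeCut_ne_singleton.2 fun S e hS => ?_
  wlog ha : .inl a ∈ S generalizing S
  · exact this Sᶜ (by rw [edgeCut_compl, hS]) ha
  have huniq : ∀ g g', g ∈ edgeCut (attachPath H a b) S → g' ∈ edgeCut (attachPath H a b) S →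
      g = g' := by simp [hS]
  simp only [mem_edgeCut_attachPath] at huniq
  by_cases hb : .inl b ∈ S
  · have hpath : .inr false ∈ S ∧ .inr true ∈ S := by
      have h₁ := huniq s(.inl a, .inr false) s(.inr false, .inr true)
      have h₂ := huniq s(.inl a, .inr false) s(.inl b, .inr true)
      have h₃ := huniq s(.inr false, .inr true) s(.inl b, .inr true)
      simp only [Sym2.eq_iff, Sum.inl.injEq, Sum.inr.injEq, reduceCtorEq, Bool.false_eq_true,
        Bool.true_eq_false, and_false, and_true, and_self, or_false, false_or, or_self,
        imp_false, not_or] at h₁ h₂ h₃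
      tauto
    obtain ⟨e', he', rfl⟩ : ∃ e' ∈ edgeCut H (Sum.inl ⁻¹' S), e'.map Sum.inl = e := by
      have he := mem_edgeCut_attachPath.1 (hS ▸ rfl : e ∈ edgeCut (attachPath H a b) S)
      tauto
    refine hbridge (Sum.inl ⁻¹' S) e' ha (Set.eq_singleton_iff_unique_mem.2 ⟨he', ?_⟩) hb
    exact fun g hg => Sym2.map.injective Sum.inl_injective
      (huniq _ _ (.inl ⟨g, hg, rfl⟩) (.inl ⟨e', he', rfl⟩))
  · obtain ⟨e', he'⟩ := hsep (Sum.inl ⁻¹' S) ha hb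
    have hold := fun g => huniq (e'.map Sum.inl) g (.inl ⟨e', he', rfl⟩)
    induction e' with | _ u v =>
    have h₁ := hold s(.inl a, .inr false)
    have h₂ := hold s(.inr false, .inr true)
    have h₃ := hold s(.inl b, .inr true)
    simp only [Sym2.map_mk, Sym2.eq_iff, Sum.inl.injEq, Sum.inr.injEq, reduceCtorEq,
      and_false, false_and, and_true, and_self, or_false, false_or, or_self, imp_false,
      not_or] at h₁ h₂ h₃
    tauto

end AttachPath

section ArcFunctions

/-- Skew-symmetric arc functions: `K u v` is the amount of flow sent from `u` to `v`. -/
def IsSkew (K : V → V → ℤ) : Prop :=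
  ∀ u v, K v u = -K u v

/-- The net amount of flow that the arc function `K` sends out of `v`. -/
def divergence [Fintype V] (K : V → V → ℤ) (v : V) : ℤ :=
  ∑ w, K v w

variable {K L : V → V → ℤ}

lemma IsSkew.add (hK : IsSkew K) (hL : IsSkew L) : IsSkew (K + L) := by
  intro u v
  simp only [Pi.add_apply, hK u v, hL u v]
  ring

lemma IsSkew.const_mul (hK : IsSkew K) (c : ℤ) : IsSkew fun u v => c * K u v := by
  intro u v
  simp only [hK u v, mul_neg]

lemma divergence_add [Fintype V] : divergence (K + L) = divergence K + divergence L := by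
  ext v
  simp only [divergence, Pi.add_apply, sum_add_distrib]

lemma divergence_const_mul [Fintype V] (c : ℤ) (v : V) :
    divergence (fun u w => c * K u w) v = c * divergence K v := by
  simp only [divergence, mul_sum]

lemma IsSkew.sum_divergence [Fintype V] (hK : IsSkew K) (S : Finset V) :
    ∑ v ∈ S, divergence K v = ∑ v ∈ S, ∑ w ∈ Sᶜ, K v w := by
  have hinner : ∑ v ∈ S, ∑ w ∈ S, K v w = 0 := by
    have hneg : ∑ v ∈ S, ∑ w ∈ S, K v w = -∑ v ∈ S, ∑ w ∈ S, K v w := by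
      conv_lhs => rw [sum_comm]
      simp only [← sum_neg_distrib, ← hK _ _]
    omega
  simp only [divergence, ← sum_add_sum_compl S, sum_add_distrib, hinner, zero_add]

lemma IsSkew.sum_univ_divergence [Fintype V] (hK : IsSkew K) : ∑ v, divergence K v = 0 := by
  simp [hK.sum_divergence]

end ArcFunctions

section WalkFlow

variable {G : SimpleGraph V} {a b : V}

/-- The unit flow along the walk `p`, counting each traversal of an edge with its direction. -/
noncomputable def walkFlow (p : G.Walk a b) (u v : V) : ℤ :=
  (p.darts.map Dart.toProd).count (u, v) - (p.darts.map Dart.toProd).count (v, u)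

lemma isSkew_walkFlow (p : G.Walk a b) : IsSkew (walkFlow p) := by
  intro u v
  simp only [walkFlow, neg_sub]

lemma divergence_walkFlow [Fintype V] (p : G.Walk a b) :
    divergence (walkFlow p) = Pi.single a 1 - Pi.single b 1 := by
  induction p with
  | nil => simp [divergence, walkFlow, funext_iff]
  | @cons a c b hac p ih =>
    have hcons (v w : V) : walkFlow (.cons hac p) v w = walkFlow p v w +
        ((if w = c then (Pi.single a 1 : V → ℤ) v else 0) -
          if w = a then (Pi.single c 1 : V → ℤ) v else 0) := by
      simp only [walkFlow, Walk.darts_cons, List.map_cons, List.count_cons, beq_iff_eq,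
        Prod.mk.injEq, Pi.single_apply, Nat.cast_add, Nat.cast_ite]
      grind
    ext v
    have hsum : divergence (walkFlow p) v = _ := congrFun ih v
    simp only [divergence] at hsum
    simp [divergence, hcons, sum_add_distrib, hsum]

lemma walkFlow_eq_sign {p : G.Walk a b} (hp : p.IsTrail) {h : V → V → ℤ} (hskew : IsSkew h)
    (hpos : ∀ d ∈ p.darts, 0 < h d.fst d.snd) (u v : V) :
    walkFlow p u v = if s(u, v) ∈ p.edges then (h u v).sign else 0 := by
  have hnodup : (p.darts.map Dart.toProd).Nodup :=
    (List.Nodup.of_map _ hp.edges_nodup).map Dart.toProd_injective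
  have hpos' (x y : V) (hxy : (x, y) ∈ p.darts.map Dart.toProd) : 0 < h x y := by
    obtain ⟨d, hd, hdxy⟩ := List.mem_map.1 hxy
    simpa [hdxy] using hpos d hd
  have hedges : s(u, v) ∈ p.edges ↔
      (u, v) ∈ p.darts.map Dart.toProd ∨ (v, u) ∈ p.darts.map Dart.toProd := by
    simp only [Walk.edges, List.mem_map, dart_edge_eq_mk'_iff, and_or_left, exists_or]
  have := hpos' u v
  have := hpos' v u
  have := hskew u v
  simp only [walkFlow, hnodup.count, hedges]
  split_ifs <;> grind [Int.sign_eq_one_of_pos, Int.sign_eq_neg_one_of_neg]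

lemma exists_isPath_of_reflTransGen {R : V → V → Prop} (hR : ∀ u v, R u v → G.Adj u v)
    (hab : Relation.ReflTransGen R a b) :
    ∃ p : G.Walk a b, p.IsPath ∧ ∀ d ∈ p.darts, R d.fst d.snd := by
  obtain ⟨q, hq⟩ : ∃ q : G.Walk a b, ∀ d ∈ q.darts, R d.fst d.snd := by
    induction hab with
    | refl => exact ⟨.nil, by simp⟩
    | tail _ hcd ih =>
      obtain ⟨q, hq⟩ := ih
      refine ⟨q.concat (hR _ _ hcd), fun d hd => ?_⟩
      simp only [Walk.darts_concat, List.concat_eq_append, List.mem_append,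
        List.mem_singleton] at hd
      rcases hd with hd | rfl
      · exact hq d hd
      · exact hcd
  exact ⟨q.bypass, q.bypass_isPath, fun d hd => hq d (q.darts_bypass_subset_darts hd)⟩

end WalkFlow

section Reroute

/-- Subtracts `k` units of flow along the walk `p`. -/
noncomputable def reroute {G : SimpleGraph V} {x y : V} (k : ℤ) (f : V → V → ℤ)
    (p : G.Walk x y) : V → V → ℤ :=
  f + fun u v => -k * walkFlow p u v

variable {G : SimpleGraph V} {x y : V} {k : ℤ} {f : V → V → ℤ} {p : G.Walk x y}

lemma reroute_apply (hf : IsSkew f) (hp : p.IsTrail) (hpos : ∀ d ∈ p.darts, 0 < f d.fst d.snd)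
    (u v : V) :
    reroute k f p u v = if s(u, v) ∈ p.edges then f u v - k * (f u v).sign else f u v := by
  simp only [reroute, Pi.add_apply, walkFlow_eq_sign hp hf hpos]
  split_ifs <;> ring

lemma divergence_reroute [Fintype V] (v : V) :
    divergence (reroute k f p) v =
      divergence f v - k * ((Pi.single x 1 : V → ℤ) v - (Pi.single y 1 : V → ℤ) v) := by
  rw [reroute, divergence_add, Pi.add_apply, divergence_const_mul, divergence_walkFlow,
    Pi.sub_apply]
  ring

end Reroute

section ModularFlows

variable [Fintype V]

/-- A flow modulo `k`, given by representatives of absolute value less than `k`. -/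
structure IsModFlow (k : ℤ) (f : V → V → ℤ) : Prop where
  isSkew : IsSkew f
  abs_lt : ∀ u v, |f u v| < k
  dvd_divergence : ∀ v, k ∣ divergence f v

variable {G : SimpleGraph V} {x y : V} {k : ℤ} {f : V → V → ℤ} {p : G.Walk x y}

lemma isModFlow_reroute (hf : IsModFlow k f) (hp : p.IsTrail)
    (hpos : ∀ d ∈ p.darts, 0 < f d.fst d.snd) : IsModFlow k (reroute k f p) where
  isSkew := hf.isSkew.add ((isSkew_walkFlow p).const_mul _)
  abs_lt u v := by
    have := hf.abs_lt u v
    rw [reroute_apply hf.isSkew hp hpos]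
    rcases lt_trichotomy (f u v) 0 with h | h | h <;>
      grind [Int.sign_eq_one_of_pos, Int.sign_eq_neg_one_of_neg]
  dvd_divergence v := by
    rw [divergence_reroute]
    exact (hf.dvd_divergence v).sub (dvd_mul_right _ _)

lemma reroute_eq_zero_iff (hf : IsModFlow k f) (hp : p.IsTrail)
    (hpos : ∀ d ∈ p.darts, 0 < f d.fst d.snd) (u v : V) : reroute k f p u v = 0 ↔ f u v = 0 := by
  have := hf.abs_lt u v
  rw [reroute_apply hf.isSkew hp hpos]
  rcases lt_trichotomy (f u v) 0 with h | h | h <;>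
    grind [Int.sign_eq_one_of_pos, Int.sign_eq_neg_one_of_neg]

lemma IsSkew.exists_reflTransGen_divergence_neg (hf : IsSkew f) {a b : V}
    (hx : |f a b| < divergence f x) :
    ∃ y, Relation.ReflTransGen (fun u v => 0 < f u v ∧ s(u, v) ≠ s(a, b)) x y ∧
      divergence f y < 0 := by
  by_contra! hnonneg
  set R := Relation.ReflTransGen (fun u v => 0 < f u v ∧ s(u, v) ≠ s(a, b)) x
  set S : Finset V := univ.filter R with hS
  have hxS : x ∈ S := by simpa [hS] using Relation.ReflTransGen.refl
  have hle : divergence f x ≤ ∑ p ∈ S ×ˢ Sᶜ, f p.1 p.2 := by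
    rw [sum_product, ← hf.sum_divergence]
    exact single_le_sum (fun v hv => hnonneg v (by simpa [hS] using hv)) hxS
  have hterm : ∀ p ∈ S ×ˢ Sᶜ, f p.1 p.2 ≤ if s(p.1, p.2) = s(a, b) then |f a b| else 0 := by
    rintro ⟨v, w⟩ hvw
    simp only [hS, mem_product, mem_compl, mem_filter_univ] at hvw
    split_ifs with hab
    · rcases Sym2.eq_iff.1 hab with ⟨rfl, rfl⟩ | ⟨rfl, rfl⟩
      · exact le_abs_self _
      · simpa only [hf w v] using neg_le_abs (f w v)
    · by_contra! hpos
      exact hvw.2 (hvw.1.tail ⟨hpos, hab⟩)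
  have hcard : #{p ∈ S ×ˢ Sᶜ | s(p.1, p.2) = s(a, b)} ≤ 1 := by
    refine card_le_one.2 fun p hp q hq => ?_
    simp only [mem_filter, mem_product, mem_compl] at hp hq
    have := hp.2.trans hq.2.symm
    grind
  have := hle.trans (sum_le_sum hterm)
  rw [← sum_filter, sum_const, nsmul_eq_mul] at this
  have : (#{p ∈ S ×ˢ Sᶜ | s(p.1, p.2) = s(a, b)} : ℤ) * |f a b| ≤ 1 * |f a b| := by
    gcongr
    exact_mod_cast hcard
  linarith

lemma IsModFlow.exists_smaller_divergence (hf : IsModFlow k f) (hdiv : divergence f ≠ 0)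
    (a b : V) :
    ∃ g, IsModFlow k g ∧ (∀ u v, g u v = 0 ↔ f u v = 0) ∧ g a b = f a b ∧
      ∑ v, (divergence g v).natAbs < ∑ v, (divergence f v).natAbs := by
  obtain ⟨x, -, hx⟩ : ∃ x ∈ univ, 0 < divergence f x :=
    exists_pos_of_sum_zero_of_exists_nonzero _ hf.isSkew.sum_univ_divergence
      (by simpa using Function.ne_iff.1 hdiv)
  have hkx : k ≤ divergence f x := Int.le_of_dvd hx (hf.dvd_divergence x)
  obtain ⟨y, hxy, hy⟩ := hf.isSkew.exists_reflTransGen_divergence_neg ((hf.abs_lt a b).trans_le hkx)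
  have hky : k ≤ -divergence f y := Int.le_of_dvd (by lia) ((hf.dvd_divergence y).neg_right)
  obtain ⟨p, hp, hpR⟩ := exists_isPath_of_reflTransGen (G := ⊤)
    (fun u v huv => by rintro rfl; have := hf.isSkew u u; lia) hxy
  have hpos : ∀ d ∈ p.darts, 0 < f d.fst d.snd := fun d hd => (hpR d hd).1
  refine ⟨reroute k f p, isModFlow_reroute hf hp.isTrail hpos,
    reroute_eq_zero_iff hf hp.isTrail hpos, ?_, ?_⟩
  · rw [reroute_apply hf.isSkew hp.isTrail hpos, if_neg]
    intro hab
    obtain ⟨d, hd, hdab⟩ := List.mem_map.1 hab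
    exact (hpR d hd).2 hdab
  · have hk : 0 < k := (abs_nonneg _).trans_lt (hf.abs_lt x x)
    refine sum_lt_sum (fun v _ => ?_) ⟨x, mem_univ x, ?_⟩ <;>
      simp only [divergence_reroute, Pi.single_apply] <;> grind

theorem IsModFlow.exists_divergence_eq_zero (hf : IsModFlow k f) (a b : V) :
    ∃ g, IsModFlow k g ∧ (∀ u v, g u v = 0 ↔ f u v = 0) ∧ g a b = f a b ∧ divergence g = 0 := by
  induction hn : ∑ v, (divergence f v).natAbs using Nat.strong_induction_on generalizing f with
  | _ n ih =>
  by_cases hdiv : divergence f = 0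
  · exact ⟨f, hf, fun _ _ => Iff.rfl, rfl, hdiv⟩
  · obtain ⟨g, hg, hsupp, hab, hlt⟩ := hf.exists_smaller_divergence hdiv a b
    obtain ⟨g', hg', hsupp', hab', hdiv'⟩ := ih _ (hn ▸ hlt) hg rfl
    exact ⟨g', hg', fun u v => (hsupp' u v).trans (hsupp u v), hab'.trans hab, hdiv'⟩

lemma isModFlow_tmod (hk : 0 < k) (hf : IsSkew f) (hdvd : ∀ v, k ∣ divergence f v) :
    IsModFlow k fun u v => (f u v).tmod k where
  isSkew u v := by simp only [hf u v, Int.neg_tmod]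
  abs_lt u v := abs_lt.2 ⟨Int.lt_tmod_of_pos _ hk, Int.tmod_lt_of_pos _ hk⟩
  dvd_divergence v := by
    simp only [divergence, Int.tmod_def, sum_sub_distrib, ← mul_sum]
    exact (hdvd v).sub (dvd_mul_right _ _)

lemma exists_mul_tmod_eq_one (hk : Prime k) (hk' : 1 < k) {c : ℤ} (hc : ¬k ∣ c) :
    ∃ t, ¬k ∣ t ∧ (t * c).tmod k = 1 := by
  obtain ⟨s, r, hsr⟩ : IsCoprime c k := (hk.coprime_iff_not_dvd.2 hc).symm
  -- The square makes `t * c` nonnegative, so that its truncated remainder is the residue `1`.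
  have htc : s * s * c * c = 1 + k * (r * (r * k - 2)) := by
    linear_combination (s * c + (1 - r * k)) * hsr
  refine ⟨s * s * c, fun ⟨d, hd⟩ => hk.not_isUnit (isUnit_of_dvd_one ?_), ?_⟩
  · exact ⟨d * c - r * (r * k - 2), by linear_combination c * hd - htc⟩
  · rw [Int.tmod_eq_emod_of_nonneg (by nlinarith [sq_nonneg (s * c)]), htc,
      Int.add_mul_emod_self_left, Int.emod_eq_of_lt zero_le_one hk']

theorem IsModFlow.exists_apply_eq_one (hk : Prime k) (hf : IsModFlow k f) {a b : V}
    (hab : f a b ≠ 0) :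
    ∃ g, IsModFlow k g ∧ (∀ u v, g u v = 0 ↔ f u v = 0) ∧ g a b = 1 ∧ divergence g = 0 := by
  have hdvd (u v : V) : k ∣ f u v ↔ f u v = 0 :=
    ⟨fun h => Int.eq_zero_of_abs_lt_dvd h (hf.abs_lt u v), fun h => h ▸ dvd_zero k⟩
  have hk' : 1 < k := (Int.one_le_abs hab).trans_lt (hf.abs_lt a b)
  obtain ⟨t, ht, htab⟩ := exists_mul_tmod_eq_one hk hk' ((hdvd a b).not.2 hab)
  have hmod : IsModFlow k fun u v => (t * f u v).tmod k :=
    isModFlow_tmod (by lia) (hf.isSkew.const_mul t) fun v =>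
      divergence_const_mul t v ▸ (hf.dvd_divergence v).mul_left t
  obtain ⟨g, hg, hsupp, hgab, hdiv⟩ := hmod.exists_divergence_eq_zero a b
  refine ⟨g, hg, fun u v => ?_, hgab.trans htab, hdiv⟩
  rw [hsupp, ← hdvd, ← Int.dvd_iff_tmod_eq_zero, hk.dvd_mul, or_iff_right ht]

end ModularFlows

section HalfEdgeFlow

/-- A nowhere-zero flow on the signed graph with underlying graph `G` and set of negative edges
`N`, encoded by half-edges: `F u v` is the flow through the half-edge at `u` of the edge `uv`,
counted as positive when it enters `u`. -/
structure IsHalfEdgeFlow [Fintype V] (G : SimpleGraph V) (N : Set (Sym2 V)) (F : V → V → ℤ) :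
    Prop where
  ne_zero_iff : ∀ {u v}, F u v ≠ 0 ↔ G.Adj u v
  sum_eq_zero : ∀ v, ∑ w, F v w = 0
  swap_of_mem : ∀ {u v}, s(u, v) ∈ N → F v u = F u v
  swap_of_notMem : ∀ {u v}, s(u, v) ∉ N → F v u = -F u v

variable [Fintype V] {G : SimpleGraph V} {σ : Sym2 V → ℤ} {N : Set (Sym2 V)} {F : V → V → ℤ}

lemma IsHalfEdgeFlow.eq_zero_of_not_adj (hF : IsHalfEdgeFlow G N F) {u v : V}
    (huv : ¬G.Adj u v) : F u v = 0 :=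
  not_ne_iff.1 (hF.ne_zero_iff.not.2 huv)

lemma IsHalfEdgeFlow.abs_swap (hF : IsHalfEdgeFlow G N F) (u v : V) : |F v u| = |F u v| := by
  by_cases h : s(u, v) ∈ N
  · rw [hF.swap_of_mem h]
  · rw [hF.swap_of_notMem h, abs_neg]

lemma IsHalfEdgeFlow.abs_eq (hF : IsHalfEdgeFlow G N F) {u v u' v' : V}
    (h : s(u, v) = s(u', v')) : |F u v| = |F u' v'| := by
  rcases Sym2.eq_iff.1 h with ⟨rfl, rfl⟩ | ⟨rfl, rfl⟩
  · rfl
  · exact hF.abs_swap _ _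

theorem IsNZFlow.exists_isHalfEdgeFlow (hσ : IsSignature G σ) {k : ℤ} {τ : V → Sym2 V → ℤ}
    {φ : Sym2 V → ℤ} (h : IsNZFlow G σ k τ φ) :
    ∃ F, IsHalfEdgeFlow G (NegEdges G σ) F ∧ ∀ u v, G.Adj u v → |F u v| < k := by
  obtain ⟨⟨⟨hτ, hτσ⟩, hsum⟩, hφ⟩ := h
  have hφ0 {u v : V} (huv : G.Adj u v) : φ s(u, v) ≠ 0 := abs_pos.1 (hφ s(u, v) huv).1
  refine ⟨fun u v => if G.Adj u v then τ u s(u, v) * φ s(u, v) else 0,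
    ⟨fun {u v} => ?_, hsum, fun {u v} huv => ?_, fun {u v} huv => ?_⟩, fun u v huv => ?_⟩
  · have := hτ u s(u, v)
    have hτ0 : τ u s(u, v) ≠ 0 := by lia
    simpa [hτ0] using hφ0
  · have := hτ u s(u, v)
    have := hτ v s(u, v)
    have hmul := hτσ u v huv.1
    rw [huv.2] at hmul
    have hττ : τ v s(u, v) = τ u s(u, v) := by grind
    simp [G.adj_comm v u, Sym2.eq_swap (a := v), hττ]
  · by_cases hadj : G.Adj u v
    · have := hτ u s(u, v)
      have := hτ v s(u, v)
      have hmul := hτσ u v hadj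
      have : σ s(u, v) = 1 := (hσ s(u, v) hadj).resolve_right fun h => huv ⟨hadj, h⟩
      have hττ : τ v s(u, v) = -τ u s(u, v) := by grind
      simp [G.adj_comm v u, Sym2.eq_swap (a := v), hττ, hadj]
    · simp [G.adj_comm v u, hadj]
  · have := hτ u s(u, v)
    have := (hφ s(u, v) huv).2
    grind

theorem IsHalfEdgeFlow.exists_isFlow (hσ : IsSignature G σ)
    (hF : IsHalfEdgeFlow G (NegEdges G σ) F) :
    ∃ τ φ, IsFlow G σ τ φ ∧ ∀ u v, φ s(u, v) = |F u v| := by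
  let τ : V → Sym2 V → ℤ := fun v e => if ∃ w, e = s(v, w) ∧ F v w < 0 then -1 else 1
  let φ : Sym2 V → ℤ := Sym2.lift ⟨fun u v => |F u v|, fun u v => hF.abs_swap v u⟩
  have hτ (u v : V) : τ u s(u, v) = if F u v < 0 then -1 else 1 := by
    simp only [τ, Sym2.congr_right, exists_eq_left']
  refine ⟨τ, φ, ⟨⟨fun v e => ?_, fun u v huv => ?_⟩, fun v => ?_⟩, fun u v => rfl⟩
  · exact (ite_eq_or_eq _ _ _).symm
  · have hne := hF.ne_zero_iff.2 huv
    have hτ' : τ v s(u, v) = if F v u < 0 then -1 else 1 := by rw [Sym2.eq_swap, hτ]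
    by_cases hneg : s(u, v) ∈ NegEdges G σ
    · have := hF.swap_of_mem hneg
      have := hneg.2
      grind
    · have := hF.swap_of_notMem hneg
      have : σ s(u, v) = 1 := (hσ s(u, v) huv).resolve_right fun h => hneg ⟨huv, h⟩
      grind
  · refine (sum_congr rfl fun w _ => ?_).trans (hF.sum_eq_zero v)
    have hφ : φ s(v, w) = |F v w| := rfl
    have := hF.ne_zero_iff (u := v) (v := w)
    grind

lemma isHalfEdgeFlow_empty_iff : IsHalfEdgeFlow G ∅ F ↔
    IsSkew F ∧ divergence F = 0 ∧ ∀ u v, F u v ≠ 0 ↔ G.Adj u v :=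
  ⟨fun hF => ⟨fun _ _ => hF.swap_of_notMem (Set.notMem_empty _), funext hF.sum_eq_zero,
    fun _ _ => hF.ne_zero_iff⟩, fun ⟨hskew, hdiv, hsupp⟩ =>
    ⟨hsupp _ _, congrFun hdiv, fun h => absurd h (Set.notMem_empty _), fun _ => hskew _ _⟩⟩

lemma IsHalfEdgeFlow.sum_mem_eq_zero (hF : IsHalfEdgeFlow G N F) :
    ∑ v, ∑ w, (if s(v, w) ∈ N then F v w else 0) = 0 := by
  have hskew : IsSkew fun v w => if s(v, w) ∈ N then 0 else F v w := by
    intro u v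
    by_cases h : s(u, v) ∈ N
    · simp [h, Sym2.eq_swap (a := v)]
    · simp [h, Sym2.eq_swap (a := v), hF.swap_of_notMem h]
  have hsplit : ∑ v, ∑ w, F v w = ∑ v, ∑ w, (if s(v, w) ∈ N then F v w else 0) +
      ∑ v, divergence (fun v w => if s(v, w) ∈ N then 0 else F v w) v := by
    simp only [divergence, ← sum_add_distrib]
    refine sum_congr rfl fun v _ => sum_congr rfl fun w _ => ?_
    split_ifs <;> simp
  simpa [hskew.sum_univ_divergence, hF.sum_eq_zero] using hsplit.symm

lemma sum_ite_mk_eq {x y : V} (hxy : x ≠ y) (f : V → V → ℤ) (v : V) :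
    ∑ w, (if s(v, w) = s(x, y) then f v w else 0) =
      (Pi.single x (f x y) : V → ℤ) v + (Pi.single y (f y x) : V → ℤ) v := by
  have hterm (w : V) : (if s(v, w) = s(x, y) then f v w else 0) =
      (if w = y then (Pi.single x (f x y) : V → ℤ) v else 0) +
        if w = x then (Pi.single y (f y x) : V → ℤ) v else 0 := by
    simp only [Sym2.eq_iff, Pi.single_apply]
    grind
  simp only [hterm, sum_add_distrib, sum_ite_eq', mem_univ, if_true]

lemma sum_sum_ite_mk_eq {x y : V} (hxy : x ≠ y) (f : V → V → ℤ) :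
    ∑ v, ∑ w, (if s(v, w) = s(x, y) then f v w else 0) = f x y + f y x := by
  simp only [sum_ite_mk_eq hxy]
  simp [sum_add_distrib]

lemma IsHalfEdgeFlow.negEdges_ne_singleton (hF : IsHalfEdgeFlow G N F) {e : Sym2 V}
    (he : e ∈ G.edgeSet) : N ≠ {e} := by
  rintro rfl
  induction e with | _ x y =>
  have hsum := hF.sum_mem_eq_zero
  simp only [Set.mem_singleton_iff, sum_sum_ite_mk_eq (G.ne_of_adj he)] at hsum
  have := hF.ne_zero_iff.2 he
  have := hF.swap_of_mem (Set.mem_singleton s(x, y))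
  lia

lemma IsHalfEdgeFlow.add_eq_zero {x₁ y₁ x₂ y₂ : V}
    (hF : IsHalfEdgeFlow G {s(x₁, y₁), s(x₂, y₂)} F) (h₁ : G.Adj x₁ y₁) (h₂ : G.Adj x₂ y₂)
    (hne : s(x₁, y₁) ≠ s(x₂, y₂)) : F x₁ y₁ + F x₂ y₂ = 0 := by
  have hsum := hF.sum_mem_eq_zero
  have hsplit (v w : V) : (if s(v, w) = s(x₁, y₁) ∨ s(v, w) = s(x₂, y₂) then F v w else 0) =
      (if s(v, w) = s(x₁, y₁) then F v w else 0) + if s(v, w) = s(x₂, y₂) then F v w else 0 := by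
    grind
  simp only [Set.mem_insert_iff, Set.mem_singleton_iff, hsplit, sum_add_distrib,
    sum_sum_ite_mk_eq h₁.ne, sum_sum_ite_mk_eq h₂.ne] at hsum
  have := hF.swap_of_mem (u := x₁) (v := y₁) (by simp)
  have := hF.swap_of_mem (u := x₂) (v := y₂) (by simp)
  lia

end HalfEdgeFlow

section Switching

open scoped symmDiff

/-- Switching at `S`: the half-edges outside `S` are reversed. -/
noncomputable def switchAt (S : Set V) (F : V → V → ℤ) (u v : V) : ℤ :=
  if u ∈ S then F u v else -F u v

variable {G : SimpleGraph V} {N : Set (Sym2 V)} {F : V → V → ℤ} {S : Set V} {e₁ e₂ f : Sym2 V}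

lemma abs_switchAt (S : Set V) (F : V → V → ℤ) (u v : V) : |switchAt S F u v| = |F u v| := by
  unfold switchAt
  split_ifs <;> simp

lemma switchAt_swap [Fintype V] (hF : IsHalfEdgeFlow G N F) (S : Set V) (u v : V) :
    switchAt S F v u =
      if s(u, v) ∈ N ∆ edgeCut G S then switchAt S F u v else -switchAt S F u v := by
  have := hF.swap_of_mem (u := u) (v := v)
  have := hF.swap_of_notMem (u := u) (v := v)
  have := hF.ne_zero_iff (u := u) (v := v)
  simp only [Set.mem_symmDiff, mk_mem_edgeCut, switchAt]
  grind

lemma isHalfEdgeFlow_switchAt [Fintype V] (hF : IsHalfEdgeFlow G N F) (S : Set V) :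
    IsHalfEdgeFlow G (N ∆ edgeCut G S) (switchAt S F) where
  ne_zero_iff {u v} := by rw [← hF.ne_zero_iff, ← abs_pos, abs_switchAt, abs_pos]
  sum_eq_zero v := by
    by_cases hv : v ∈ S <;> simp [switchAt, hv, hF.sum_eq_zero]
  swap_of_mem {u v} huv := by rw [switchAt_swap hF, if_pos huv]
  swap_of_notMem {u v} huv := by rw [switchAt_swap hF, if_neg huv]

/-- `e₁` and `e₂` are distinct edges of `G`, and the signed graph on `G` with negative edges
`e₁` and `e₂` is flow-admissible. -/
structure IsAdmissiblePair [Fintype V] (G : SimpleGraph V) (e₁ e₂ : Sym2 V) : Prop where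
  mem_left : e₁ ∈ G.edgeSet
  mem_right : e₂ ∈ G.edgeSet
  ne : e₁ ≠ e₂
  exists_flow : ∃ F, IsHalfEdgeFlow G {e₁, e₂} F

variable [Fintype V]

lemma IsAdmissiblePair.symm (h : IsAdmissiblePair G e₁ e₂) : IsAdmissiblePair G e₂ e₁ :=
  ⟨h.mem_right, h.mem_left, h.ne.symm, Set.pair_comm e₁ e₂ ▸ h.exists_flow⟩

lemma IsAdmissiblePair.switch (h : IsAdmissiblePair G e₁ e₂) (hS : edgeCut G S = {e₁, f})
    (hf₁ : f ≠ e₁) (hf₂ : f ≠ e₂) : IsAdmissiblePair G f e₂ := by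
  obtain ⟨F, hF⟩ := h.exists_flow
  have hf : f ∈ edgeCut G S := by simp [hS]
  refine ⟨hf.1, h.mem_right, hf₂, switchAt S F, ?_⟩
  convert isHalfEdgeFlow_switchAt hF S using 1
  have := h.ne
  ext e
  simp only [hS, Set.mem_symmDiff, Set.mem_insert_iff, Set.mem_singleton_iff]
  grind

lemma IsAdmissiblePair.edgeCut_ne_triple (h : IsAdmissiblePair G e₁ e₂) (hf₁ : f ≠ e₁)
    (hf₂ : f ≠ e₂) : edgeCut G S ≠ {e₁, e₂, f} := by
  intro hS
  obtain ⟨F, hF⟩ := h.exists_flow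
  have hf : f ∈ edgeCut G S := by simp [hS]
  refine (isHalfEdgeFlow_switchAt hF S).negEdges_ne_singleton hf.1 ?_
  ext e
  simp only [hS, Set.mem_symmDiff, Set.mem_insert_iff, Set.mem_singleton_iff]
  grind

lemma IsAdmissiblePair.edgeCut_nonempty (h : IsAdmissiblePair G e₁ e₂) {x y : V}
    (hx : x ∈ e₁) (hy : y ∈ e₂) (hxS : x ∈ S) (hyS : y ∉ S) : (edgeCut G S).Nonempty := by
  obtain ⟨x', rfl⟩ := hx
  obtain ⟨y', rfl⟩ := hy
  obtain ⟨F, hF⟩ := h.exists_flow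
  by_contra! hS
  have hF' := isHalfEdgeFlow_switchAt hF S
  rw [hS, Set.bot_eq_empty.symm, symmDiff_bot] at hF'
  have hsum := hF.add_eq_zero h.mem_left h.mem_right h.ne
  have hsum' := hF'.add_eq_zero h.mem_left h.mem_right h.ne
  have := hF.ne_zero_iff.2 h.mem_left
  simp only [switchAt, hxS, hyS, if_true, if_false] at hsum'
  lia

end Switching

section Tutte

/-- Tutte's 5-flow conjecture, for finite simple graphs. -/
def TutteFiveFlow : Prop :=
  ∀ (W : Type) [Fintype W] (H : SimpleGraph W), Bridgeless H → ∃ τ φ, IsNZFlow H allPos 5 τ φ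

lemma negEdges_allPos (G : SimpleGraph V) : NegEdges G allPos = ∅ := by
  simp [NegEdges, allPos]

theorem exists_isHalfEdgeFlow_apply_eq_one [Fintype V] (tutte : TutteFiveFlow) {H : SimpleGraph V}
    (hH : Bridgeless H) {a b : V} (hab : H.Adj a b) :
    ∃ g, IsHalfEdgeFlow H ∅ g ∧ (∀ u v, |g u v| < 5) ∧ g a b = 1 := by
  obtain ⟨τ, φ, hφ⟩ := tutte V H hH
  have hσ : IsSignature H allPos := fun _ _ => .inl rfl
  obtain ⟨F, hF, hlt⟩ := hφ.exists_isHalfEdgeFlow hσ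
  rw [negEdges_allPos, isHalfEdgeFlow_empty_iff] at hF
  obtain ⟨hskew, hdiv, hsupp⟩ := hF
  have hmod : IsModFlow 5 F := by
    refine ⟨hskew, fun u v => ?_, fun _ => hdiv ▸ dvd_zero 5⟩
    by_cases huv : H.Adj u v
    · exact hlt u v huv
    · simp [not_ne_iff.1 ((hsupp u v).not.2 huv)]
  obtain ⟨g, hg, hgF, hgab, hgdiv⟩ :=
    hmod.exists_apply_eq_one (by norm_num [Int.prime_iff_natAbs_prime]) ((hsupp a b).2 hab)
  exact ⟨g, isHalfEdgeFlow_empty_iff.2 ⟨hg.isSkew, hgdiv, fun u v =>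
    (hgF u v).not.trans (hsupp u v)⟩, hg.abs_lt, hgab⟩

end Tutte

section SixFlowWithPath

open scoped symmDiff

variable [Fintype V]

/-- The signed graph on `G` with negative edges `N` has a nowhere-zero 6-flow with value `±1` on
`N` and a path that contains all edges of value `±5` and no edge of value `±1`. -/
def HasSixFlowWithPath (G : SimpleGraph V) (N : Set (Sym2 V)) : Prop :=
  ∃ F, IsHalfEdgeFlow G N F ∧ (∀ u v, |F u v| ≤ 5) ∧ (∀ u v, s(u, v) ∈ N → |F u v| = 1) ∧
    ∃ (a b : V) (p : G.Walk a b), p.IsPath ∧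
      ∀ u v, (|F u v| = 5 → s(u, v) ∈ p.edges) ∧ (s(u, v) ∈ p.edges → |F u v| ≠ 1)

variable {G : SimpleGraph V} {F : V → V → ℤ} {S : Set V} {e₁ e₂ f : Sym2 V}

lemma IsAdmissiblePair.abs_eq_abs (h : IsAdmissiblePair G e₁ e₂)
    (hF : IsHalfEdgeFlow G {e₁, e₂} F) {u v u' v' : V} (huv : s(u, v) ∈ ({e₁, e₂} : Set (Sym2 V)))
    (huv' : s(u', v') ∈ ({e₁, e₂} : Set (Sym2 V))) : |F u v| = |F u' v'| := by
  have hcross (x y x' y' : V) (h₁ : s(x, y) = e₁) (h₂ : s(x', y') = e₂) :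
      |F x y| = |F x' y'| := by
    subst h₁ h₂
    rw [eq_neg_of_add_eq_zero_left (hF.add_eq_zero h.mem_left h.mem_right h.ne), abs_neg]
  rcases huv with huv | huv <;> rcases huv' with huv' | huv'
  · exact hF.abs_eq (huv.trans huv'.symm)
  · exact hcross _ _ _ _ huv huv'
  · exact (hcross _ _ _ _ huv' huv).symm
  · exact hF.abs_eq (huv.trans huv'.symm)

lemma HasSixFlowWithPath.switch (h : IsAdmissiblePair G e₁ e₂) (hS : edgeCut G S = {e₁, f})
    (hf₁ : f ≠ e₁) (hf₂ : f ≠ e₂) (hflow : HasSixFlowWithPath G {f, e₂}) :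
    HasSixFlowWithPath G {e₁, e₂} := by
  obtain ⟨F, hF, hle, hone, a, b, p, hp, hpath⟩ := hflow
  have hN : ({f, e₂} : Set (Sym2 V)) ∆ edgeCut G S = {e₁, e₂} := by
    have := h.ne
    ext e
    simp only [hS, Set.mem_symmDiff, Set.mem_insert_iff, Set.mem_singleton_iff]
    grind
  have hF' : IsHalfEdgeFlow G {e₁, e₂} (switchAt S F) := hN ▸ isHalfEdgeFlow_switchAt hF S
  refine ⟨switchAt S F, hF', ?_, fun u v huv => ?_, a, b, p, hp, ?_⟩
  · simpa only [abs_switchAt] using hle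
  · induction e₂ with | _ x y =>
    rw [h.abs_eq_abs hF' huv (.inr rfl), abs_switchAt]
    exact hone x y (.inr rfl)
  · simpa only [abs_switchAt] using hpath

theorem hasSixFlowWithPath_of_edgeCut_eq_pair (tutte : TutteFiveFlow) (hG : Bridgeless G)
    (h : IsAdmissiblePair G e₁ e₂) (hS : edgeCut G S = {e₁, e₂}) :
    HasSixFlowWithPath G {e₁, e₂} := by
  induction e₁ with | _ x y =>
  obtain ⟨g, hg, hlt, hone⟩ := exists_isHalfEdgeFlow_apply_eq_one tutte hG h.mem_left
  have hF := isHalfEdgeFlow_switchAt hg S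
  rw [hS, ← Set.bot_eq_empty, bot_symmDiff] at hF
  refine ⟨_, hF, fun u v => ?_, fun u v huv => ?_, x, x, .nil, .nil, fun u v => ⟨?_, by simp⟩⟩
  · simpa only [abs_switchAt] using (hlt u v).le
  · rw [h.abs_eq_abs hF huv (.inl rfl), abs_switchAt, hone, abs_one]
  · rw [abs_switchAt]
    exact fun h5 => absurd h5 (hlt u v).ne

end SixFlowWithPath

section BlockingCut

/-- A 2-edge-cut `{e, f}` of `G` whose side `S` contains the end `x` of `e` and both ends of `e'`.
Such cuts are exactly the obstructions to replacing the negative edges `e` and `e'` by a positive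
edge at `x`. -/
structure IsBlockingCut (G : SimpleGraph V) (x : V) (e e' f : Sym2 V) (S : Set V) : Prop where
  edgeCut_eq : edgeCut G S = {e, f}
  anchor_mem : x ∈ S
  mem_of_mem : ∀ v ∈ e', v ∈ S

variable {G : SimpleGraph V} {e₁ e₂ : Sym2 V}

variable [Fintype V]

theorem IsAdmissiblePair.bridgeless_attachPath_deleteEdges (hG : Bridgeless G)
    (h : IsAdmissiblePair G e₁ e₂)
    {x₁ x₂ : V} (hx₁ : x₁ ∈ e₁) (hx₂ : x₂ ∈ e₂) (hcut : ∀ S, edgeCut G S ≠ {e₁, e₂})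
    (hblock₁ : ∀ f S, ¬IsBlockingCut G x₁ e₁ e₂ f S)
    (hblock₂ : ∀ f S, ¬IsBlockingCut G x₂ e₂ e₁ f S) :
    Bridgeless (attachPath (G.deleteEdges {e₁, e₂}) x₁ x₂) := by
  rw [bridgeless_iff_edgeCut_ne_singleton] at hG
  refine bridgeless_attachPath (fun S hS₁ hS₂ => ?_) fun S f hS₁ hS hS₂ => ?_
  · have hne := h.edgeCut_nonempty hx₁ hx₂ hS₁ hS₂
    by_contra! hempty
    rw [edgeCut_deleteEdges, Set.sdiff_eq_empty, Set.subset_pair_iff_eq] at hempty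
    have := hG S
    have := hcut S
    grind [Set.not_nonempty_empty]
  · rw [edgeCut_deleteEdges] at hS
    have hf : f ∈ edgeCut G S \ {e₁, e₂} := by simp [hS]
    simp only [Set.mem_sdiff, Set.mem_insert_iff, Set.mem_singleton_iff, not_or] at hf
    obtain ⟨-, hf₁, hf₂⟩ := hf
    have hiff (e : Sym2 V) (h₁ : e ≠ e₁) (h₂ : e ≠ e₂) : e ∈ edgeCut G S ↔ e = f := by
      simpa [h₁, h₂] using Set.ext_iff.1 hS e
    by_cases h₁ : e₁ ∈ edgeCut G S <;> by_cases h₂ : e₂ ∈ edgeCut G S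
    · refine h.edgeCut_ne_triple (S := S) hf₁ hf₂ (Set.ext fun e => ?_)
      grind
    · refine hblock₁ f S ⟨Set.ext fun e => ?_, hS₁,
        forall_mem_of_notMem_edgeCut h.mem_right h₂ hx₂ hS₂⟩
      grind
    · refine hblock₂ f S ⟨Set.ext fun e => ?_, hS₂,
        forall_mem_of_notMem_edgeCut h.mem_left h₁ hx₁ hS₁⟩
      grind
    · refine hG S f (Set.ext fun e => ?_)
      grind

end BlockingCut

section AttachPathFlow

variable [Fintype V] {H : SimpleGraph V} {a b : V} {g : V ⊕ Bool → V ⊕ Bool → ℤ}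

lemma IsHalfEdgeFlow.attachPath_inr_inr (hg : IsHalfEdgeFlow (attachPath H a b) ∅ g) (i : Bool) :
    g (.inr i) (.inr !i) = g (.inl (cond i b a)) (.inr i) := by
  obtain ⟨hskew, hdiv, -⟩ := isHalfEdgeFlow_empty_iff.1 hg
  have hloop : g (.inr i) (.inr i) = 0 := hg.eq_zero_of_not_adj (SimpleGraph.irrefl _)
  have hold (v : V) : g (.inr i) (.inl v) =
      if v = cond i b a then -g (.inl (cond i b a)) (.inr i) else 0 := by
    split_ifs with hv
    · rw [hv, hskew]
    · exact hg.eq_zero_of_not_adj (by simpa [(attachPath H a b).adj_comm] using hv)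
  have hrow := congrFun hdiv (.inr i)
  simp only [divergence, Fintype.sum_sum_type, hold, Fintype.sum_bool, sum_ite_eq', mem_univ,
    if_true, Pi.zero_apply] at hrow
  cases i <;> simp only [hloop, Bool.not_true, Bool.not_false] at hrow ⊢ <;> lia

lemma IsHalfEdgeFlow.attachPath_inl_inr_true (hg : IsHalfEdgeFlow (attachPath H a b) ∅ g) :
    g (.inl b) (.inr true) = -g (.inl a) (.inr false) :=
  calc g (.inl b) (.inr true) = g (.inr true) (.inr false) := (hg.attachPath_inr_inr true).symm
    _ = -g (.inr false) (.inr true) := (isHalfEdgeFlow_empty_iff.1 hg).1 _ _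
    _ = -g (.inl a) (.inr false) := congrArg Neg.neg (hg.attachPath_inr_inr false)

lemma IsHalfEdgeFlow.divergence_attachPath_inl (hg : IsHalfEdgeFlow (attachPath H a b) ∅ g) :
    divergence (fun u v => g (.inl u) (.inl v)) =
      g (.inl a) (.inr false) • (Pi.single b 1 - Pi.single a 1) := by
  have hlast := hg.attachPath_inl_inr_true
  generalize hc : g (.inl a) (.inr false) = c at hlast ⊢
  have hnew (v : V) (i : Bool) :
      g (.inl v) (.inr i) = if v = cond i b a then cond i (-c) c else 0 := by
    split_ifs with hv
    · cases i <;> simp [hv, hc, hlast]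
    · exact hg.eq_zero_of_not_adj (by simpa using hv)
  ext v
  have hrow := hg.sum_eq_zero (.inl v)
  simp only [Fintype.sum_sum_type, hnew, Fintype.sum_bool, cond_true, cond_false] at hrow
  simp only [divergence, Pi.smul_apply, Pi.sub_apply, Pi.single_apply, smul_eq_mul]
  grind

theorem exists_skew_of_bridgeless_attachPath (tutte : TutteFiveFlow)
    (hbl : Bridgeless (attachPath H a b)) :
    ∃ h, IsSkew h ∧ (∀ u v, h u v ≠ 0 ↔ H.Adj u v) ∧ (∀ u v, |h u v| < 5) ∧
      divergence h = Pi.single b 1 - Pi.single a 1 := by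
  obtain ⟨g, hg, hlt, hone⟩ := exists_isHalfEdgeFlow_apply_eq_one tutte hbl
    (a := .inl a) (b := .inr false) (by simp)
  refine ⟨fun u v => g (.inl u) (.inl v), fun u v => (isHalfEdgeFlow_empty_iff.1 hg).1 _ _,
    fun u v => hg.ne_zero_iff.trans attachPath_adj_inl_inl, fun u v => hlt _ _, ?_⟩
  rw [hg.divergence_attachPath_inl, hone, one_smul]

end AttachPathFlow

section PairFlow

variable {G : SimpleGraph V} {e₁ e₂ : Sym2 V} {a b : V} {h : V → V → ℤ}
  {p : (G.deleteEdges {e₁, e₂}).Walk a b}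

/-- The half-edge function with value `1` on the edge `e₁`, `-1` on `e₂`, and `0` elsewhere. -/
noncomputable def pairFlow (e₁ e₂ : Sym2 V) (u v : V) : ℤ :=
  (if s(u, v) = e₁ then 1 else 0) - if s(u, v) = e₂ then 1 else 0

lemma divergence_pairFlow [Fintype V] {x₁ y₁ x₂ y₂ : V} (h₁ : x₁ ≠ y₁) (h₂ : x₂ ≠ y₂) :
    divergence (pairFlow s(x₁, y₁) s(x₂, y₂)) =
      Pi.single x₁ 1 + Pi.single y₁ 1 - (Pi.single x₂ 1 + Pi.single y₂ 1) := by
  ext v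
  simp only [divergence, pairFlow, sum_sub_distrib, sum_ite_mk_eq h₁ (fun _ _ => 1),
    sum_ite_mk_eq h₂ (fun _ _ => 1), Pi.sub_apply, Pi.add_apply]

lemma add_walkFlow_add_pairFlow_apply (hne : e₁ ≠ e₂) (hp : p.IsTrail) (hskew : IsSkew h)
    (hsupp : ∀ u v, h u v ≠ 0 ↔ (G.deleteEdges {e₁, e₂}).Adj u v)
    (hpos : ∀ d ∈ p.darts, 0 < h d.fst d.snd) (u v : V) :
    (h + walkFlow p + pairFlow e₁ e₂) u v =
      if s(u, v) = e₁ then 1 else if s(u, v) = e₂ then -1 else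
      if s(u, v) ∈ p.edges then h u v + (h u v).sign else h u v := by
  have hadj : s(u, v) ∈ p.edges → (G.deleteEdges {e₁, e₂}).Adj u v := p.adj_of_mem_edges
  have := hsupp u v
  simp only [deleteEdges_adj, Set.mem_insert_iff, Set.mem_singleton_iff] at hadj this
  simp only [Pi.add_apply, pairFlow, walkFlow_eq_sign hp hskew hpos]
  grind

lemma abs_add_sign {n : ℤ} (hn : n ≠ 0) : |n + n.sign| = |n| + 1 := by
  rcases hn.lt_or_gt with hn | hn
  · rw [Int.sign_eq_neg_one_of_neg hn, abs_of_neg hn, abs_of_neg (by lia)]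
    ring
  · rw [Int.sign_eq_one_of_pos hn, abs_of_pos hn, abs_of_pos (by lia)]

lemma abs_add_walkFlow_add_pairFlow_apply (hne : e₁ ≠ e₂) (hp : p.IsTrail) (hskew : IsSkew h)
    (hsupp : ∀ u v, h u v ≠ 0 ↔ (G.deleteEdges {e₁, e₂}).Adj u v)
    (hpos : ∀ d ∈ p.darts, 0 < h d.fst d.snd) (u v : V) :
    |(h + walkFlow p + pairFlow e₁ e₂) u v| =
      if s(u, v) ∈ ({e₁, e₂} : Set (Sym2 V)) then 1 else
      if s(u, v) ∈ p.edges then |h u v| + 1 else |h u v| := by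
  have hne_zero (huv : s(u, v) ∈ p.edges) : h u v ≠ 0 := (hsupp u v).2 (p.adj_of_mem_edges huv)
  simp only [add_walkFlow_add_pairFlow_apply hne hp hskew hsupp hpos, Set.mem_insert_iff,
    Set.mem_singleton_iff]
  grind [abs_add_sign]

lemma isHalfEdgeFlow_add_walkFlow_add_pairFlow [Fintype V] (hadm : IsAdmissiblePair G e₁ e₂)
    (hp : p.IsTrail) (hskew : IsSkew h)
    (hsupp : ∀ u v, h u v ≠ 0 ↔ (G.deleteEdges {e₁, e₂}).Adj u v)
    (hpos : ∀ d ∈ p.darts, 0 < h d.fst d.snd)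
    (hdiv : divergence (h + walkFlow p + pairFlow e₁ e₂) = 0) :
    IsHalfEdgeFlow G {e₁, e₂} (h + walkFlow p + pairFlow e₁ e₂) where
  ne_zero_iff {u v} := by
    have hneg : s(u, v) ∈ ({e₁, e₂} : Set (Sym2 V)) → G.Adj u v := by
      rintro (rfl | rfl)
      exacts [hadm.mem_left, hadm.mem_right]
    have hadj : s(u, v) ∈ p.edges → (G.deleteEdges {e₁, e₂}).Adj u v := p.adj_of_mem_edges
    have hiff := hsupp u v
    rw [← abs_pos, abs_add_walkFlow_add_pairFlow_apply hadm.ne hp hskew hsupp hpos]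
    simp only [deleteEdges_adj] at hadj hiff
    grind
  sum_eq_zero := congrFun hdiv
  swap_of_mem {u v} huv := by
    simp only [add_walkFlow_add_pairFlow_apply hadm.ne hp hskew hsupp hpos, Sym2.eq_swap (a := v)]
    rcases huv with rfl | rfl <;> simp
  swap_of_notMem {u v} huv := by
    simp only [Set.mem_insert_iff, Set.mem_singleton_iff, not_or] at huv
    simp only [add_walkFlow_add_pairFlow_apply hadm.ne hp hskew hsupp hpos, Sym2.eq_swap (a := v),
      hskew u v, Int.sign_neg, huv, if_false]
    split_ifs <;> ring

theorem hasSixFlowWithPath_of_divergence_eq_zero [Fintype V] (hadm : IsAdmissiblePair G e₁ e₂)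
    (hp : p.IsPath) (hskew : IsSkew h)
    (hsupp : ∀ u v, h u v ≠ 0 ↔ (G.deleteEdges {e₁, e₂}).Adj u v) (hlt : ∀ u v, |h u v| < 5)
    (hpos : ∀ d ∈ p.darts, 0 < h d.fst d.snd)
    (hdiv : divergence (h + walkFlow p + pairFlow e₁ e₂) = 0) :
    HasSixFlowWithPath G {e₁, e₂} := by
  refine ⟨_, isHalfEdgeFlow_add_walkFlow_add_pairFlow hadm hp.isTrail hskew hsupp hpos hdiv,
    fun u v => ?_, fun u v huv => ?_, a, b, p.mapLe (deleteEdges_le _), hp.mapLe _,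
    fun u v => ?_⟩ <;>
    rw [abs_add_walkFlow_add_pairFlow_apply hadm.ne hp.isTrail hskew hsupp hpos]
  · have := hlt u v
    split_ifs <;> lia
  · exact if_pos huv
  · rw [Walk.edges_mapLe_eq_edges]
    have hadj : s(u, v) ∈ p.edges → (G.deleteEdges {e₁, e₂}).Adj u v := p.adj_of_mem_edges
    have hne_zero : (G.deleteEdges {e₁, e₂}).Adj u v → 0 < |h u v| := abs_pos.2.comp (hsupp u v).2
    have := hlt u v
    simp only [deleteEdges_adj] at hadj hne_zero
    split_ifs <;> grind

end PairFlow

section NoBlockingCut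

variable [Fintype V] {G : SimpleGraph V}

lemma IsSkew.ncard_edgeCut_le_neg_sum_divergence {h : V → V → ℤ} (hskew : IsSkew h)
    (hsupp : ∀ u v, G.Adj u v → h u v ≠ 0) {S : Finset V}
    (hS : ∀ u ∈ S, ∀ v ∉ S, h u v ≤ 0) :
    ((edgeCut G S).ncard : ℤ) ≤ -∑ v ∈ S, divergence h v := by
  set C := {x ∈ S ×ˢ Sᶜ | h x.1 x.2 ≠ 0}
  have hsub : edgeCut G S ⊆ C.image fun x => s(x.1, x.2) := by
    intro e he
    obtain ⟨u, hu, v, hv, huv, rfl⟩ := exists_adj_of_mem_edgeCut he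
    refine mem_coe.2 (mem_image.2 ⟨(u, v), ?_, rfl⟩)
    simp_all [C]
  calc ((edgeCut G S).ncard : ℤ) ≤ #C := by
        exact_mod_cast (Set.ncard_le_ncard hsub).trans
          ((Set.ncard_coe_finset _).trans_le card_image_le)
    _ = ∑ x ∈ C, 1 := by simp
    _ ≤ ∑ x ∈ C, -h x.1 x.2 := by
        refine sum_le_sum fun x hx => ?_
        simp only [C, mem_filter, mem_product, mem_compl] at hx
        have := hS x.1 hx.1.1 x.2 hx.1.2
        lia
    _ = ∑ x ∈ S ×ˢ Sᶜ, -h x.1 x.2 := by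
        rw [sum_filter_of_ne]
        simp
    _ = -∑ v ∈ S, divergence h v := by
        rw [sum_neg_distrib, hskew.sum_divergence, sum_product']

variable {x₁ y₁ x₂ y₂ : V} {h : V → V → ℤ}

lemma IsAdmissiblePair.sub_lt_ncard_edgeCut_deleteEdges (hG : Bridgeless G)
    (hadm : IsAdmissiblePair G s(x₁, y₁) s(x₂, y₂))
    (hcut : ∀ S, edgeCut G S ≠ {s(x₁, y₁), s(x₂, y₂)}) {S : Set V} (hy₁ : y₁ ∉ S)
    (hy₂ : y₂ ∈ S) : ((if x₁ ∈ S then 1 else 0) - if x₂ ∈ S then 1 else 0 : ℤ) <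
      (edgeCut (G.deleteEdges {s(x₁, y₁), s(x₂, y₂)}) S).ncard := by
  rw [bridgeless_iff_edgeCut_ne_singleton] at hG
  by_contra! hcard
  have he₁ : s(x₁, y₁) ∈ edgeCut G S ↔ x₁ ∈ S := by
    simpa [mk_mem_edgeCut, hy₁] using fun _ => hadm.mem_left
  have he₂ : s(x₂, y₂) ∈ edgeCut G S ↔ x₂ ∉ S := by
    simpa [mk_mem_edgeCut, hy₂] using fun _ => hadm.mem_right
  rw [edgeCut_deleteEdges] at hcard
  set D := edgeCut G S \ {s(x₁, y₁), s(x₂, y₂)}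
  have hD (e : Sym2 V) : e ∈ D ↔ e ∈ edgeCut G S ∧ e ≠ s(x₁, y₁) ∧ e ≠ s(x₂, y₂) := by simp [D]
  by_cases hx₁ : x₁ ∈ S <;> by_cases hx₂ : x₂ ∈ S <;>
    simp only [hx₁, hx₂, if_true, if_false, not_true, not_false_iff, iff_true, iff_false]
      at hcard he₁ he₂
  · have hempty : D = ∅ := (Set.ncard_eq_zero).1 (by lia)
    refine hG S s(x₁, y₁) (Set.ext fun e => ?_)
    grind
  · rcases (Set.ncard_le_one_iff_eq).1 (by lia : D.ncard ≤ 1) with hempty | ⟨f, hf⟩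
    · refine hcut S (Set.ext fun e => ?_)
      grind
    · have hfD := (hD f).1 (hf ▸ rfl)
      refine hadm.edgeCut_ne_triple hfD.2.1 hfD.2.2 (S := S) (Set.ext fun e => ?_)
      grind
  · lia
  · have hempty : D = ∅ := (Set.ncard_eq_zero).1 (by lia)
    refine hG S s(x₂, y₂) (Set.ext fun e => ?_)
    grind

theorem IsAdmissiblePair.reflTransGen_pos (hG : Bridgeless G)
    (hadm : IsAdmissiblePair G s(x₁, y₁) s(x₂, y₂))
    (hcut : ∀ S, edgeCut G S ≠ {s(x₁, y₁), s(x₂, y₂)}) (hskew : IsSkew h)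
    (hsupp : ∀ u v, h u v ≠ 0 ↔ (G.deleteEdges {s(x₁, y₁), s(x₂, y₂)}).Adj u v)
    (hdiv : divergence h = Pi.single x₂ 1 - Pi.single x₁ 1) :
    Relation.ReflTransGen (fun u v => 0 < h u v) y₂ y₁ := by
  by_contra hreach
  set S : Finset V := {v | Relation.ReflTransGen (fun u v => 0 < h u v) y₂ v}
  have hy₂ : y₂ ∈ S := by simp [S, Relation.ReflTransGen.refl]
  have hy₁ : y₁ ∉ S := by simpa [S] using hreach
  have hout : ∀ u ∈ S, ∀ v ∉ S, h u v ≤ 0 := by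
    intro u hu v hv
    simp only [S, mem_filter_univ] at hu hv
    exact not_lt.1 fun huv => hv (hu.tail huv)
  have hle := hskew.ncard_edgeCut_le_neg_sum_divergence (fun u v => (hsupp u v).2) hout
  have hgt := hadm.sub_lt_ncard_edgeCut_deleteEdges hG hcut (S := S) hy₁ hy₂
  simp only [hdiv, Pi.sub_apply, sum_sub_distrib, sum_pi_single', mem_coe] at hle hgt
  lia

theorem hasSixFlowWithPath_of_reflTransGen_pos
    (hadm : IsAdmissiblePair G s(x₁, y₁) s(x₂, y₂)) (hskew : IsSkew h)
    (hsupp : ∀ u v, h u v ≠ 0 ↔ (G.deleteEdges {s(x₁, y₁), s(x₂, y₂)}).Adj u v)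
    (hlt : ∀ u v, |h u v| < 5) (hdiv : divergence h = Pi.single x₂ 1 - Pi.single x₁ 1)
    (hreach : Relation.ReflTransGen (fun u v => 0 < h u v) y₂ y₁) :
    HasSixFlowWithPath G {s(x₁, y₁), s(x₂, y₂)} := by
  obtain ⟨p, hp, hpos⟩ := exists_isPath_of_reflTransGen
    (fun u v huv => (hsupp u v).1 huv.ne') hreach
  refine hasSixFlowWithPath_of_divergence_eq_zero hadm hp hskew hsupp hlt hpos ?_
  rw [divergence_add, divergence_add, hdiv, divergence_walkFlow,
    divergence_pairFlow hadm.mem_left.ne hadm.mem_right.ne]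
  ring

theorem hasSixFlowWithPath_of_not_isBlockingCut (tutte : TutteFiveFlow) (hG : Bridgeless G)
    {e₁ e₂ : Sym2 V} (hadm : IsAdmissiblePair G e₁ e₂) (hx₁ : x₁ ∈ e₁) (hx₂ : x₂ ∈ e₂)
    (hcut : ∀ S, edgeCut G S ≠ {e₁, e₂})
    (hblock₁ : ∀ f S, ¬IsBlockingCut G x₁ e₁ e₂ f S)
    (hblock₂ : ∀ f S, ¬IsBlockingCut G x₂ e₂ e₁ f S) : HasSixFlowWithPath G {e₁, e₂} := by
  obtain ⟨h, hskew, hsupp, hlt, hdiv⟩ := exists_skew_of_bridgeless_attachPath tutte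
    (hadm.bridgeless_attachPath_deleteEdges hG hx₁ hx₂ hcut hblock₁ hblock₂)
  obtain ⟨y₁, rfl⟩ := hx₁
  obtain ⟨y₂, rfl⟩ := hx₂
  exact hasSixFlowWithPath_of_reflTransGen_pos hadm hskew hsupp hlt hdiv
    (hadm.reflTransGen_pos hG hcut hskew hsupp hdiv)

end NoBlockingCut

section Reduction

variable {G : SimpleGraph V} {S T : Set V} {x x₁ x₂ : V} {e₁ e₂ f g : Sym2 V}

lemma IsBlockingCut.cut_edge_ne_left (hG : Bridgeless G) (hS : IsBlockingCut G x e₁ e₂ f S) :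
    f ≠ e₁ := by
  rintro rfl
  exact bridgeless_iff_edgeCut_ne_singleton.1 hG S f (by rw [hS.edgeCut_eq, Set.pair_eq_singleton])

lemma IsBlockingCut.cut_edge_ne_right (hS : IsBlockingCut G x e₁ e₂ f S) : f ≠ e₂ := by
  rintro rfl
  obtain ⟨-, -, v, hv, hvS⟩ : f ∈ edgeCut G S := by simp [hS.edgeCut_eq]
  exact hvS (hS.mem_of_mem v hv)

lemma IsBlockingCut.inter [Fintype V] (hG : Bridgeless G) (hadm : IsAdmissiblePair G e₁ e₂)
    (hx : x ∈ e₁) (hS : IsBlockingCut G x e₁ e₂ f S) {q : V} (hq : q ∈ f) (hqS : q ∉ S)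
    (hT : IsBlockingCut G q f e₂ g T) : IsBlockingCut G x e₁ e₂ g (S ∩ T) := by
  rw [bridgeless_iff_edgeCut_ne_singleton] at hG
  obtain ⟨y, rfl⟩ := hx
  obtain ⟨p, rfl⟩ := hq
  have he₁ : s(x, y) ∈ edgeCut G S := by simp [hS.edgeCut_eq]
  have hf : s(q, p) ∈ edgeCut G T := by simp [hT.edgeCut_eq]
  rw [mk_mem_edgeCut] at he₁ hf
  have hxS := hS.anchor_mem
  have hqT := hT.anchor_mem
  have hmem : ∀ v ∈ e₂, v ∈ S ∩ T := fun v hv => ⟨hS.mem_of_mem v hv, hT.mem_of_mem v hv⟩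
  have hf' : s(q, p) ∉ edgeCut G (S ∩ T) := by
    rw [mk_mem_edgeCut]
    grind
  have hsub : edgeCut G (S ∩ T) ⊆ {s(x, y), g} := by
    intro e he
    have := edgeCut_inter_subset he
    rw [hS.edgeCut_eq, hT.edgeCut_eq] at this
    grind
  have hne : (edgeCut G (S ∩ T)).Nonempty := by
    induction e₂ with | _ a b =>
    refine hadm.symm.edgeCut_nonempty (Sym2.mem_mk_left a b) (Sym2.mem_mk_right x y)
      (hmem a (Sym2.mem_mk_left a b)) ?_
    grind
  have hcut : edgeCut G (S ∩ T) = {s(x, y), g} := by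
    have := hG (S ∩ T)
    grind [Set.subset_pair_iff_eq, Set.not_nonempty_empty]
  refine ⟨hcut, ?_, hmem⟩
  have : s(x, y) ∈ edgeCut G (S ∩ T) := by simp [hcut]
  rw [mk_mem_edgeCut] at this
  grind

lemma exists_isBlockingCut_forall_not_isBlockingCut [Fintype V] (hG : Bridgeless G)
    (hadm : IsAdmissiblePair G e₁ e₂) (hx : x ∈ e₁) (hS : IsBlockingCut G x e₁ e₂ f S) :
    ∃ f S, IsBlockingCut G x e₁ e₂ f S ∧ ∃ q ∈ f, ∀ g T, ¬IsBlockingCut G q f e₂ g T := by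
  obtain ⟨S, ⟨f, hS⟩, hmin⟩ :=
    (Set.toFinite {S | ∃ f, IsBlockingCut G x e₁ e₂ f S}).exists_minimal ⟨S, f, hS⟩
  obtain ⟨p, hpS, q, hqS, -, rfl⟩ := exists_adj_of_mem_edgeCut
    (by simp [hS.edgeCut_eq] : f ∈ edgeCut G S)
  have hq := Sym2.mem_mk_right p q
  refine ⟨s(p, q), S, hS, q, hq, fun g T hT => ?_⟩
  have hpT : p ∈ T := (hmin ⟨g, hS.inter hG hadm hx hq hqS hT⟩ Set.inter_subset_left hpS).2
  have hpq : s(p, q) ∈ edgeCut G T := by simp [hT.edgeCut_eq]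
  exact (mk_mem_edgeCut.1 hpq).2 (iff_of_true hpT hT.anchor_mem)

lemma IsBlockingCut.edgeCut_sdiff_eq_pair (hG : Bridgeless G)
    (hS : IsBlockingCut G x₁ e₁ e₂ f S) (hT : IsBlockingCut G x₂ e₂ f g T)
    (he₁ : ∀ v ∈ e₁, v ∉ T) : edgeCut G (S \ T) = {e₁, e₂} := by
  have hST : edgeCut G (S \ T) ⊆ {e₁, f} ∪ {e₂, g} :=
    hS.edgeCut_eq ▸ hT.edgeCut_eq ▸ edgeCut_sdiff_subset
  have hTS : edgeCut G (T \ S) ⊆ {e₂, g} ∪ {e₁, f} :=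
    hS.edgeCut_eq ▸ hT.edgeCut_eq ▸ edgeCut_sdiff_subset
  have hmem₁ : e₁ ∈ edgeCut G (S \ T) ∧ e₁ ∉ edgeCut G (T \ S) :=
    mem_edgeCut_sdiff_of_forall_notMem (by simp [hS.edgeCut_eq]) he₁
  have hmem₂ : e₂ ∈ edgeCut G (S \ T) ∧ e₂ ∉ edgeCut G (T \ S) :=
    mem_edgeCut_sdiff_of_forall_mem (by simp [hT.edgeCut_eq]) hS.mem_of_mem
  have hmemf : f ∈ edgeCut G (T \ S) ∧ f ∉ edgeCut G (S \ T) :=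
    mem_edgeCut_sdiff_of_forall_mem (by simp [hS.edgeCut_eq]) hT.mem_of_mem
  have hg : g ∈ edgeCut G (T \ S) := by
    have := bridgeless_iff_edgeCut_ne_singleton.1 hG (T \ S) f
    grind
  have hg' : g ∉ edgeCut G (S \ T) := by
    by_cases hgS : g ∈ edgeCut G S
    · rw [hS.edgeCut_eq] at hgS
      grind
    · exact notMem_edgeCut_sdiff_of_mem hg hgS
  refine Set.ext fun e => ?_
  grind

lemma IsBlockingCut.of_cut_edge (hG : Bridgeless G) (he₁ : e₁ ∈ G.edgeSet) (hne : e₁ ≠ e₂)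
    (hcut : ∀ S, edgeCut G S ≠ {e₁, e₂}) (hS : IsBlockingCut G x₁ e₁ e₂ f S)
    (hT : IsBlockingCut G x₂ e₂ f g T) : IsBlockingCut G x₂ e₂ e₁ g T := by
  refine ⟨hT.edgeCut_eq, hT.anchor_mem, ?_⟩
  have he₁T : e₁ ∉ edgeCut G T := by
    intro he₁T
    have hg : e₁ = g := by simpa [hT.edgeCut_eq, hne] using he₁T
    exact hcut T (by rw [hT.edgeCut_eq, hg, Set.pair_comm])
  by_contra! ⟨u, hu, huT⟩
  refine hcut (S \ T) (hS.edgeCut_sdiff_eq_pair hG hT ?_)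
  exact forall_mem_of_notMem_edgeCut (S := Tᶜ) he₁ (by rwa [edgeCut_compl]) hu huT

variable [Fintype V]

theorem hasSixFlowWithPath_of_not_isBlockingCut_left (tutte : TutteFiveFlow) (hG : Bridgeless G)
    (hadm : IsAdmissiblePair G e₁ e₂) (hx₁ : x₁ ∈ e₁)
    (hblock : ∀ f S, ¬IsBlockingCut G x₁ e₁ e₂ f S) : HasSixFlowWithPath G {e₁, e₂} := by
  by_cases! hcut : ∃ S, edgeCut G S = {e₁, e₂}
  · obtain ⟨S, hS⟩ := hcut
    exact hasSixFlowWithPath_of_edgeCut_eq_pair tutte hG hadm hS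
  obtain ⟨x₂, hx₂⟩ : ∃ x₂, x₂ ∈ e₂ := ⟨_, e₂.out_fst_mem⟩
  by_cases! hblock₂ : ∃ f S, IsBlockingCut G x₂ e₂ e₁ f S
  · obtain ⟨f, S, hS⟩ := hblock₂
    obtain ⟨f, S, hS, q, hq, hblock₂⟩ :=
      exists_isBlockingCut_forall_not_isBlockingCut hG hadm.symm hx₂ hS
    have hf₂ := hS.cut_edge_ne_left hG
    have hf₁ := hS.cut_edge_ne_right
    have hadm' := hadm.symm.switch hS.edgeCut_eq hf₂ hf₁
    rw [Set.pair_comm]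
    refine .switch hadm.symm hS.edgeCut_eq hf₂ hf₁ ?_
    by_cases! hcut' : ∃ T, edgeCut G T = {f, e₁}
    · obtain ⟨T, hT⟩ := hcut'
      exact hasSixFlowWithPath_of_edgeCut_eq_pair tutte hG hadm' hT
    · refine hasSixFlowWithPath_of_not_isBlockingCut tutte hG hadm' hq hx₁ hcut' hblock₂ ?_
      exact fun g T hT => hblock g T
        (hS.of_cut_edge hG hadm.mem_right hadm.ne.symm (fun S => Set.pair_comm e₁ e₂ ▸ hcut S) hT)
  · exact hasSixFlowWithPath_of_not_isBlockingCut tutte hG hadm hx₁ hx₂ hcut hblock hblock₂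

theorem hasSixFlowWithPath_of_isAdmissiblePair (tutte : TutteFiveFlow) (hG : Bridgeless G)
    (hadm : IsAdmissiblePair G e₁ e₂) : HasSixFlowWithPath G {e₁, e₂} := by
  obtain ⟨x₁, hx₁⟩ : ∃ x₁, x₁ ∈ e₁ := ⟨_, e₁.out_fst_mem⟩
  by_cases! hblock : ∃ f S, IsBlockingCut G x₁ e₁ e₂ f S
  · obtain ⟨f, S, hS⟩ := hblock
    obtain ⟨f, S, hS, q, hq, hblock⟩ := exists_isBlockingCut_forall_not_isBlockingCut hG hadm hx₁ hS
    have hf₁ := hS.cut_edge_ne_left hG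
    have hf₂ := hS.cut_edge_ne_right
    exact .switch hadm hS.edgeCut_eq hf₁ hf₂ <| hasSixFlowWithPath_of_not_isBlockingCut_left tutte
      hG (hadm.switch hS.edgeCut_eq hf₁ hf₂) hq hblock
  · exact hasSixFlowWithPath_of_not_isBlockingCut_left tutte hG hadm hx₁ hblock

end Reduction

/-- If Tutte's 5-flow conjecture holds, then every bridgeless
flow-admissible signed graph with exactly two negative edges admits a nowhere-zero 6-flow
with all values positive, value 1 on both negative edges, and a path containing all edges
of value 5 and no edge of value 1. -/
theorem stmt18
    (tutte : ∀ (W : Type) [Fintype W] (H : SimpleGraph W), Bridgeless H →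
      ∃ τ φ, IsNZFlow H allPos 5 τ φ)
    {V : Type} [Fintype V] (G : SimpleGraph V) (σ : Sym2 V → ℤ)
    (hσ : IsSignature G σ) (hbl : Bridgeless G) (hadm : FlowAdmissible G σ)
    (n₁ n₂ : Sym2 V) (hne : n₁ ≠ n₂) (hN : NegEdges G σ = {n₁, n₂}) :
    ∃ τ φ, IsNZFlow G σ 6 τ φ ∧ (∀ e ∈ G.edgeSet, 0 < φ e) ∧
      φ n₁ = 1 ∧ φ n₂ = 1 ∧
      ∃ (a b : V) (p : G.Walk a b), p.IsPath ∧
        (∀ e ∈ G.edgeSet, φ e = 5 → e ∈ p.edges) ∧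
        (∀ e ∈ p.edges, φ e ≠ 1) := by
  have mem_edgeSet {e : Sym2 V} (he : e ∈ ({n₁, n₂} : Set (Sym2 V))) : e ∈ G.edgeSet :=
    (hN ▸ he : e ∈ NegEdges G σ).1
  obtain ⟨k, τ₀, φ₀, hφ₀⟩ := hadm
  obtain ⟨F₀, hF₀, -⟩ := hφ₀.exists_isHalfEdgeFlow hσ
  have hpair : IsAdmissiblePair G n₁ n₂ :=
    ⟨mem_edgeSet (.inl rfl), mem_edgeSet (.inr rfl), hne, F₀, hN ▸ hF₀⟩
  obtain ⟨F, hF, hle, hone, a, b, p, hp, hpath⟩ :=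
    hasSixFlowWithPath_of_isAdmissiblePair tutte hbl hpair
  obtain ⟨τ, φ, hflow, hφ⟩ := IsHalfEdgeFlow.exists_isFlow hσ (hN ▸ hF)
  have hφ_pos : ∀ e ∈ G.edgeSet, 0 < φ e :=
    Sym2.ind fun u v huv => hφ u v ▸ abs_pos.2 (hF.ne_zero_iff.2 huv)
  have hφ_le : ∀ e, φ e ≤ 5 := Sym2.ind fun u v => hφ u v ▸ hle u v
  have hφ_one : ∀ e ∈ ({n₁, n₂} : Set (Sym2 V)), φ e = 1 :=
    Sym2.ind fun u v huv => (hφ u v).trans (hone u v huv)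
  refine ⟨τ, φ, ⟨hflow, fun e he => ?_⟩, hφ_pos, hφ_one n₁ (.inl rfl), hφ_one n₂ (.inr rfl),
    a, b, p, hp, Sym2.ind fun u v _ => ?_, Sym2.ind fun u v => ?_⟩
  · have := hφ_le e
    have := hφ_pos e he
    exact ⟨abs_pos_of_pos this, abs_lt.2 (by lia)⟩
  · exact hφ u v ▸ (hpath u v).1
  · exact hφ u v ▸ (hpath u v).2
end
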